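/- Let ν be the standard Gaussian measure on ℝ^d and B₁, ..., B_K a measurable partition with ν(B_i) = 1/K for all i, where K ≥ 5. Then for every η ≥ 1, ν({z : dist(z, complement of its own cell) ≤ η}) ≥ 1 - √(π/2)·e^{-η²/2}·e^{-η·√(log(K²/(4π log K)))}. -/

import Mathlib

open Real Set MeasureTheory ProbabilityTheory

/-- The standard normal cumulative distribution function. -/
noncomputable def Phi (x : ℝ) : ℝ :=
  (Real.sqrt (2 * π))⁻¹ * ∫ u in Set.Iic x, Real.exp (-u ^ 2 / 2)

/-- The inverse of the standard normal cdf. -/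
noncomputable def PhiInv : ℝ → ℝ := Function.invFun Phi

/-- The standard Gaussian measure `N(0, I_d)` on `ℝ^d`. -/
noncomputable def stdGaussian (d : ℕ) : Measure (Fin d → ℝ) :=
  Measure.pi fun _ => gaussianReal 0 1

/-- The Euclidean (ℓ₂) norm on `ℝ^d`. -/
noncomputable def l2 {d : ℕ} (z : Fin d → ℝ) : ℝ := Real.sqrt (∑ i, z i ^ 2)

/-- The ℓ₂ distance from a point to a set. -/
noncomputable def distSet {d : ℕ} (z : Fin d → ℝ) (A : Set (Fin d → ℝ)) : ℝ :=
  sInf {t | ∃ z' ∈ A, t = l2 (z - z')}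

/-!
For the Gaussian profile `I = φ ∘ Φ⁻¹`, Bobkov's inequality `I(E f) ≤ E √(I(f)² + |∇f|²)` holds on
the two-point space, tensorizes to the cube, and passes to the Gaussian measure by the central
limit theorem. Applied to `f = Φ(s - h)` with `h` `l`-Lipschitz, it says that `s ↦ Φ⁻¹(E Φ(s - h))`
grows at rate at least `1 / √(1 + l²)`; taking `h = n · dist(·, A)` and letting `n → ∞` gives the
isoperimetric inequality `Φ⁻¹(ν(A)) + η ≤ Φ⁻¹(ν(A_η))`.

For a cell `B` of measure at most `1 / k`, isoperimetry applied to `Bᶜ` bounds the measure of the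
points of `B` deeper than `η` by `ν(B) · e^{-η²/2} · e^{-η Φ⁻¹(1 - 1/k)}`. Summing over the cells
leaves `√(log(k² / (4π log k))) ≤ Φ⁻¹(1 - 1/k)`, which follows from Birnbaum's lower bound on the
Mills ratio.
-/

open Filter Topology
open scoped BigOperators

local notation "φ" => gaussianPDFReal 0 1

section StdNormalPDF

lemma stdNormalPDF_apply (x : ℝ) : φ x = (√(2 * π))⁻¹ * exp (-x ^ 2 / 2) := by
  simp [gaussianPDFReal]

lemma stdNormalPDF_pos (x : ℝ) : 0 < φ x := gaussianPDFReal_pos 0 1 x one_ne_zero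

lemma stdNormalPDF_neg (x : ℝ) : φ (-x) = φ x := by
  simp only [stdNormalPDF_apply, neg_sq]

lemma continuous_stdNormalPDF : Continuous φ := by
  simp only [funext stdNormalPDF_apply]; fun_prop

lemma hasDerivAt_stdNormalPDF (x : ℝ) : HasDerivAt φ (-x * φ x) x := by
  have hexponent : HasDerivAt (fun x : ℝ => -x ^ 2 / 2) (-x) x :=
    ((hasDerivAt_pow 2 x).neg.div_const 2).congr_deriv (by simp; ring)
  rw [funext stdNormalPDF_apply]
  exact (hexponent.exp.const_mul _).congr_deriv (by ring)

lemma stdNormalPDF_le_of_abs_le {x y : ℝ} (h : |x| ≤ |y|) : φ y ≤ φ x := by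
  have hsq := sq_le_sq.2 h
  simp only [stdNormalPDF_apply]
  gcongr

lemma inv_sqrt_two_mul_pi_le_one : (√(2 * π))⁻¹ ≤ 1 :=
  inv_le_one_of_one_le₀ (one_le_sqrt.2 (by linarith [pi_gt_three]))

lemma stdNormalPDF_le_one (x : ℝ) : φ x ≤ 1 := by
  have h : φ x ≤ φ 0 := stdNormalPDF_le_of_abs_le (by simp)
  refine h.trans ?_
  simpa [stdNormalPDF_apply] using inv_sqrt_two_mul_pi_le_one

lemma abs_mul_stdNormalPDF_le_one (x : ℝ) : |x| * φ x ≤ 1 := by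
  have hexp : |x| ≤ exp (x ^ 2 / 2) := by
    nlinarith [add_one_le_exp (x ^ 2 / 2), sq_nonneg (|x| - 1), sq_abs x]
  calc |x| * φ x = (√(2 * π))⁻¹ * (|x| / exp (x ^ 2 / 2)) := by
        rw [stdNormalPDF_apply, neg_div, exp_neg]; ring
    _ ≤ 1 := mul_le_one₀ inv_sqrt_two_mul_pi_le_one (by positivity)
        ((div_le_one (exp_pos _)).2 hexp)

lemma lipschitzWith_stdNormalPDF : LipschitzWith 1 φ :=
  lipschitzWith_of_nnnorm_deriv_le (fun x => (hasDerivAt_stdNormalPDF x).differentiableAt)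
    fun x => by
      rw [(hasDerivAt_stdNormalPDF x).deriv, ← NNReal.coe_le_coe, coe_nnnorm, norm_mul, norm_neg,
        norm_of_nonneg (stdNormalPDF_pos x).le]
      exact abs_mul_stdNormalPDF_le_one x

end StdNormalPDF

section StdNormalCDF

lemma Phi_eq_integral (x : ℝ) : Phi x = ∫ u in Iic x, φ u := by
  simp only [Phi, stdNormalPDF_apply, integral_const_mul]

lemma Phi_eq_cdf : Phi = cdf (gaussianReal 0 1) := by
  ext x
  rw [cdf_eq_real, Phi_eq_integral, measureReal_def,
    gaussianReal_apply_eq_integral 0 one_ne_zero, ENNReal.toReal_ofReal]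
  exact setIntegral_nonneg measurableSet_Iic fun u _ => gaussianPDFReal_nonneg 0 1 u

lemma Phi_sub_Phi (x y : ℝ) : Phi y - Phi x = ∫ u in x..y, φ u := by
  rw [Phi_eq_integral, Phi_eq_integral]
  have hφ := integrable_gaussianPDFReal 0 1
  exact intervalIntegral.integral_Iic_sub_Iic hφ.integrableOn hφ.integrableOn

lemma hasDerivAt_Phi (x : ℝ) : HasDerivAt Phi (φ x) x := by
  have h : Phi = fun y => (∫ u in (0 : ℝ)..y, φ u) + Phi 0 := by
    ext y; rw [← Phi_sub_Phi]; ring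
  rw [h]
  exact (continuous_stdNormalPDF.integral_hasStrictDerivAt 0 x).hasDerivAt.add_const _

lemma continuous_Phi : Continuous Phi :=
  continuous_iff_continuousAt.2 fun x => (hasDerivAt_Phi x).continuousAt

lemma Phi_strictMono : StrictMono Phi :=
  strictMono_of_hasDerivAt_pos hasDerivAt_Phi stdNormalPDF_pos

lemma tendsto_Phi_atTop : Tendsto Phi atTop (𝓝 1) := by
  rw [Phi_eq_cdf]; exact tendsto_cdf_atTop _

lemma tendsto_Phi_atBot : Tendsto Phi atBot (𝓝 0) := by
  rw [Phi_eq_cdf]; exact tendsto_cdf_atBot _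

lemma Phi_mem_Ioo (x : ℝ) : Phi x ∈ Ioo (0 : ℝ) 1 := by
  constructor
  · have h : 0 ≤ Phi (x - 1) := by rw [Phi_eq_cdf]; exact cdf_nonneg _ _
    exact h.trans_lt (Phi_strictMono (by linarith))
  · have h : Phi (x + 1) ≤ 1 := by rw [Phi_eq_cdf]; exact cdf_le_one _ _
    exact (Phi_strictMono (by linarith)).trans_le h

lemma Phi_neg (x : ℝ) : Phi (-x) = 1 - Phi x := by
  have hderiv (y : ℝ) : HasDerivAt (fun y => Phi y + Phi (-y)) 0 y := by
    refine ((hasDerivAt_Phi y).add ((hasDerivAt_Phi (-y)).comp y (hasDerivAt_neg y))).congr_deriv ?_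
    rw [stdNormalPDF_neg]; ring
  have hconst (y : ℝ) : Phi x + Phi (-x) = Phi y + Phi (-y) :=
    is_const_of_deriv_eq_zero (fun z => (hderiv z).differentiableAt) (fun z => (hderiv z).deriv) x y
  have hlim : Tendsto (fun y => Phi y + Phi (-y)) atTop (𝓝 (1 + 0)) :=
    tendsto_Phi_atTop.add (tendsto_Phi_atBot.comp tendsto_neg_atTop_atBot)
  linarith [tendsto_nhds_unique (tendsto_const_nhds.congr hconst) hlim]

lemma PhiInv_Phi (x : ℝ) : PhiInv (Phi x) = x :=
  Function.leftInverse_invFun Phi_strictMono.injective x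

lemma Phi_PhiInv {p : ℝ} (hp : p ∈ Ioo (0 : ℝ) 1) : Phi (PhiInv p) = p := by
  refine Function.invFun_eq ?_
  obtain ⟨a, ha⟩ := (tendsto_Phi_atBot.eventually (gt_mem_nhds hp.1)).exists
  obtain ⟨b, hb⟩ := (tendsto_Phi_atTop.eventually (lt_mem_nhds hp.2)).exists
  exact mem_range_of_exists_le_of_exists_ge continuous_Phi ⟨a, ha.le⟩ ⟨b, hb.le⟩

lemma PhiInv_strictMonoOn : StrictMonoOn PhiInv (Ioo 0 1) := fun p hp q hq hpq => by
  rw [← Phi_PhiInv hp, ← Phi_PhiInv hq] at hpq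
  exact Phi_strictMono.lt_iff_lt.1 hpq

lemma le_PhiInv_iff {x p : ℝ} (hp : p ∈ Ioo (0 : ℝ) 1) : x ≤ PhiInv p ↔ Phi x ≤ p := by
  rw [← Phi_strictMono.le_iff_le, Phi_PhiInv hp]

lemma one_sub_mem_Ioo {p : ℝ} (hp : p ∈ Ioo (0 : ℝ) 1) : 1 - p ∈ Ioo (0 : ℝ) 1 :=
  ⟨by linarith [hp.2], by linarith [hp.1]⟩

lemma PhiInv_one_sub {p : ℝ} (hp : p ∈ Ioo (0 : ℝ) 1) : PhiInv (1 - p) = -PhiInv p := by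
  conv_lhs => rw [← Phi_PhiInv hp, ← Phi_neg, PhiInv_Phi]

lemma continuousAt_PhiInv {p : ℝ} (hp : p ∈ Ioo (0 : ℝ) 1) : ContinuousAt PhiInv p := by
  refine PhiInv_strictMonoOn.continuousAt_of_image_mem_nhds (Ioo_mem_nhds hp.1 hp.2) ?_
  have himage : PhiInv '' Ioo 0 1 = univ :=
    eq_univ_of_forall fun x => ⟨Phi x, Phi_mem_Ioo x, PhiInv_Phi x⟩
  rw [himage]
  exact univ_mem

end StdNormalCDF

section GaussProfile

/-- The Gaussian isoperimetric profile `φ ∘ Φ⁻¹`: the boundary density of a half-space of Gaussian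
measure `p`. It is meaningful on `(0, 1)`, where `PhiInv` inverts `Phi`. -/
noncomputable def gaussProfile (p : ℝ) : ℝ := φ (PhiInv p)

lemma gaussProfile_pos (p : ℝ) : 0 < gaussProfile p := stdNormalPDF_pos _

lemma gaussProfile_Phi (x : ℝ) : gaussProfile (Phi x) = φ x := by
  rw [gaussProfile, PhiInv_Phi]

lemma gaussProfile_one_sub {p : ℝ} (hp : p ∈ Ioo (0 : ℝ) 1) :
    gaussProfile (1 - p) = gaussProfile p := by
  rw [gaussProfile, PhiInv_one_sub hp, stdNormalPDF_neg, gaussProfile]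

lemma hasDerivAt_PhiInv {p : ℝ} (hp : p ∈ Ioo (0 : ℝ) 1) :
    HasDerivAt PhiInv (gaussProfile p)⁻¹ p := by
  refine .of_local_left_inverse (continuousAt_PhiInv hp) (hasDerivAt_Phi _)
    (gaussProfile_pos p).ne' ?_
  filter_upwards [Ioo_mem_nhds hp.1 hp.2] with q hq using Phi_PhiInv hq

lemma hasDerivAt_gaussProfile {p : ℝ} (hp : p ∈ Ioo (0 : ℝ) 1) :
    HasDerivAt gaussProfile (-PhiInv p) p :=
  ((hasDerivAt_stdNormalPDF (PhiInv p)).comp p (hasDerivAt_PhiInv hp)).congr_deriv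
    (mul_inv_cancel_right₀ (gaussProfile_pos p).ne' _)

lemma hasDerivAt_gaussProfile_sq {p : ℝ} (hp : p ∈ Ioo (0 : ℝ) 1) :
    HasDerivAt (fun p => gaussProfile p ^ 2) (-2 * (gaussProfile p * PhiInv p)) p :=
  ((hasDerivAt_gaussProfile hp).fun_pow 2).congr_deriv (by simp; ring)

lemma hasDerivAt_gaussProfile_mul_PhiInv {p : ℝ} (hp : p ∈ Ioo (0 : ℝ) 1) :
    HasDerivAt (fun p => gaussProfile p * PhiInv p) (1 - PhiInv p ^ 2) p := by
  refine ((hasDerivAt_gaussProfile hp).mul (hasDerivAt_PhiInv hp)).congr_deriv ?_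
  field_simp [(gaussProfile_pos p).ne']
  ring

end GaussProfile

section TwoPoint

lemma nonneg_of_hasDerivAt_nonneg {f f' : ℝ → ℝ} {a b : ℝ}
    (hf : ∀ x ∈ Ico a b, HasDerivAt f (f' x) x) (hfa : 0 ≤ f a)
    (hf' : ∀ x ∈ Ico a b, 0 ≤ f' x) : ∀ x ∈ Ico a b, 0 ≤ f x := fun x hx => by
  have hmono : MonotoneOn f (Ico a b) :=
    monotoneOn_of_hasDerivWithinAt_nonneg (convex_Ico a b)
      (fun y hy => (hf y hy).continuousAt.continuousWithinAt)
      (fun y hy => (hf y (interior_subset hy)).hasDerivWithinAt)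
      fun y hy => hf' y (interior_subset hy)
  exact hfa.trans (hmono ⟨le_rfl, hx.1.trans_lt hx.2⟩ hx hx.1)

lemma nonneg_of_hasDerivAt_hasDerivAt_nonneg {f f' f'' : ℝ → ℝ} {a b : ℝ}
    (hf : ∀ x ∈ Ico a b, HasDerivAt f (f' x) x) (hf' : ∀ x ∈ Ico a b, HasDerivAt f' (f'' x) x)
    (hfa : 0 ≤ f a) (hf'a : 0 ≤ f' a) (hf'' : ∀ x ∈ Ico a b, 0 ≤ f'' x) :
    ∀ x ∈ Ico a b, 0 ≤ f x :=
  nonneg_of_hasDerivAt_nonneg hf hfa (nonneg_of_hasDerivAt_nonneg hf' hf'a hf'')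

lemma monotone_div_stdNormalPDF : Monotone fun x : ℝ => x / φ x := by
  refine monotone_of_hasDerivAt_nonneg (f' := fun x => (1 + x ^ 2) / φ x) (fun x => ?_)
    fun x => div_nonneg (by positivity) (stdNormalPDF_pos x).le
  have hφ := (stdNormalPDF_pos x).ne'
  refine ((hasDerivAt_id x).div (hasDerivAt_stdNormalPDF x) hφ).congr_deriv ?_
  simp only [id]
  field_simp
  ring

lemma convexOn_PhiInv_sq : ConvexOn ℝ (Ioo 0 1) fun p => PhiInv p ^ 2 := by
  have hderiv : ∀ p ∈ Ioo (0 : ℝ) 1,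
      HasDerivAt (fun p => PhiInv p ^ 2) (2 * (PhiInv p / φ (PhiInv p))) p := fun p hp =>
    ((hasDerivAt_PhiInv hp).fun_pow 2).congr_deriv (by simp [gaussProfile]; ring)
  refine MonotoneOn.convexOn_of_deriv (convex_Ioo 0 1)
    (fun p hp => (hderiv p hp).continuousAt.continuousWithinAt)
    (fun p hp => (hderiv p (interior_subset hp)).differentiableAt.differentiableWithinAt) ?_
  rw [interior_Ioo]
  intro p hp q hq hpq
  rw [(hderiv p hp).deriv, (hderiv q hq).deriv]
  exact mul_le_mul_of_nonneg_left
    (monotone_div_stdNormalPDF (PhiInv_strictMonoOn.monotoneOn hp hq hpq)) zero_le_two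

variable {c x : ℝ}

lemma add_mem_Ioo_of_le_half (hc : c ≤ 1 / 2) (hx : x ∈ Ico 0 c) : c + x ∈ Ioo (0 : ℝ) 1 :=
  ⟨by linarith [hx.1, hx.2], by linarith [hx.2]⟩

lemma sub_mem_Ioo_of_le_half (hc : c ≤ 1 / 2) (hx : x ∈ Ico 0 c) : c - x ∈ Ioo (0 : ℝ) 1 :=
  ⟨by linarith [hx.2], by linarith [hx.1]⟩

lemma two_mul_PhiInv_sq_le (hc : c ≤ 1 / 2) (hx : x ∈ Ico 0 c) :
    2 * PhiInv c ^ 2 ≤ PhiInv (c + x) ^ 2 + PhiInv (c - x) ^ 2 := by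
  have hmid := convexOn_PhiInv_sq.2 (add_mem_Ioo_of_le_half hc hx) (sub_mem_Ioo_of_le_half hc hx)
    (by norm_num : (0 : ℝ) ≤ 1 / 2) (by norm_num : (0 : ℝ) ≤ 1 / 2) (by norm_num)
  simp only [smul_eq_mul] at hmid
  rw [show 1 / 2 * (c + x) + 1 / 2 * (c - x) = c by ring] at hmid
  linarith

lemma abs_PhiInv_add_le (hc : c ≤ 1 / 2) (hx : x ∈ Ico 0 c) :
    |PhiInv (c + x)| ≤ |PhiInv (c - x)| := by
  have hadd := add_mem_Ioo_of_le_half hc hx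
  have hsub := sub_mem_Ioo_of_le_half hc hx
  have hlower := PhiInv_strictMonoOn.monotoneOn hsub hadd (by linarith [hx.1])
  have hupper := PhiInv_strictMonoOn.monotoneOn hsub (one_sub_mem_Ioo hadd) (by linarith)
  rw [PhiInv_one_sub hadd] at hupper
  exact (abs_le.2 ⟨by linarith, by linarith⟩).trans (neg_le_abs _)

lemma two_mul_gaussProfile_sq_add_le (hc : c ≤ 1 / 2) (hx : x ∈ Ico 0 c) :
    2 * gaussProfile c ^ 2 + (2 * PhiInv c ^ 2 - 2) * x ^ 2 ≤
      gaussProfile (c + x) ^ 2 + gaussProfile (c - x) ^ 2 := by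
  rw [← sub_nonneg]
  refine nonneg_of_hasDerivAt_hasDerivAt_nonneg
    (f := fun y => gaussProfile (c + y) ^ 2 + gaussProfile (c - y) ^ 2 -
      (2 * gaussProfile c ^ 2 + (2 * PhiInv c ^ 2 - 2) * y ^ 2))
    (f' := fun y => -2 * (gaussProfile (c + y) * PhiInv (c + y)) +
      2 * (gaussProfile (c - y) * PhiInv (c - y)) - (2 * PhiInv c ^ 2 - 2) * (2 * y))
    (f'' := fun y => 2 * PhiInv (c + y) ^ 2 + 2 * PhiInv (c - y) ^ 2 - 4 * PhiInv c ^ 2)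
    (fun y hy => ?_) (fun y hy => ?_) (by simp; linarith) (by simp)
    (fun y hy => by linarith [two_mul_PhiInv_sq_le hc hy]) x hx
  · have hadd := (hasDerivAt_gaussProfile_sq (add_mem_Ioo_of_le_half hc hy)).comp_const_add c y
    have hsub := (hasDerivAt_gaussProfile_sq (sub_mem_Ioo_of_le_half hc hy)).comp_const_sub c y
    refine ((hadd.add hsub).sub (((hasDerivAt_pow 2 y).const_mul
      (2 * PhiInv c ^ 2 - 2)).const_add (2 * gaussProfile c ^ 2))).congr_deriv ?_
    simp
  · have hadd := (hasDerivAt_gaussProfile_mul_PhiInv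
      (add_mem_Ioo_of_le_half hc hy)).comp_const_add c y
    have hsub := (hasDerivAt_gaussProfile_mul_PhiInv
      (sub_mem_Ioo_of_le_half hc hy)).comp_const_sub c y
    refine (((hadd.const_mul (-2)).add (hsub.const_mul 2)).sub
      (((hasDerivAt_id y).const_mul 2).const_mul (2 * PhiInv c ^ 2 - 2))).congr_deriv ?_
    ring

lemma gaussProfile_sq_sub_le (hc : c ≤ 1 / 2) (hx : x ∈ Ico 0 c) :
    gaussProfile (c + x) ^ 2 - gaussProfile (c - x) ^ 2 ≤
      -4 * (gaussProfile c * PhiInv c) * x := by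
  rw [← sub_nonneg]
  refine nonneg_of_hasDerivAt_hasDerivAt_nonneg
    (f := fun y => -4 * (gaussProfile c * PhiInv c) * y -
      (gaussProfile (c + y) ^ 2 - gaussProfile (c - y) ^ 2))
    (f' := fun y => -4 * (gaussProfile c * PhiInv c) -
      (-2 * (gaussProfile (c + y) * PhiInv (c + y)) -
        2 * (gaussProfile (c - y) * PhiInv (c - y))))
    (f'' := fun y => 2 * PhiInv (c - y) ^ 2 - 2 * PhiInv (c + y) ^ 2)
    (fun y hy => ?_) (fun y hy => ?_) (by simp) (by simp; linarith)
    (fun y hy => by linarith [sq_le_sq.2 (abs_PhiInv_add_le hc hy)]) x hx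
  · have hadd := (hasDerivAt_gaussProfile_sq (add_mem_Ioo_of_le_half hc hy)).comp_const_add c y
    have hsub := (hasDerivAt_gaussProfile_sq (sub_mem_Ioo_of_le_half hc hy)).comp_const_sub c y
    refine (((hasDerivAt_id y).const_mul (-4 * (gaussProfile c * PhiInv c))).sub
      (hadd.sub hsub)).congr_deriv ?_
    simp
  · have hadd := (hasDerivAt_gaussProfile_mul_PhiInv
      (add_mem_Ioo_of_le_half hc hy)).comp_const_add c y
    have hsub := (hasDerivAt_gaussProfile_mul_PhiInv
      (sub_mem_Ioo_of_le_half hc hy)).comp_const_sub c y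
    refine (((hadd.const_mul (-2)).sub (hsub.const_mul 2)).const_sub
      (-4 * (gaussProfile c * PhiInv c))).congr_deriv ?_
    ring

-- The hypothesis says `((α + β) ^ 2 - 4 * I ^ 2) * ((α - β) ^ 2 - 4 * I ^ 2) ≤ 0`, and the first
-- factor is the larger one.
lemma two_mul_le_add_of_sq_sub_sq_le {α β I : ℝ} (hα : 0 ≤ α) (hβ : 0 ≤ β)
    (h : (α ^ 2 - β ^ 2) ^ 2 ≤ 8 * I ^ 2 * (α ^ 2 + β ^ 2 - 2 * I ^ 2)) : 2 * I ≤ α + β := by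
  have hprod : ((α + β) ^ 2 - 4 * I ^ 2) * ((α - β) ^ 2 - 4 * I ^ 2) ≤ 0 := by linarith
  have hle : (α - β) ^ 2 ≤ (α + β) ^ 2 := by nlinarith [mul_nonneg hα hβ]
  have hsq : (2 * I) ^ 2 ≤ (α + β) ^ 2 := by nlinarith [hprod, hle]
  exact le_of_sq_le_sq hsq (add_nonneg hα hβ)

lemma two_mul_gaussProfile_le (hc : c ≤ 1 / 2) (hx : x ∈ Ico 0 c) :
    2 * gaussProfile c ≤ √(gaussProfile (c + x) ^ 2 + x ^ 2) +
      √(gaussProfile (c - x) ^ 2 + x ^ 2) := by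
  have hmono : gaussProfile (c - x) ≤ gaussProfile (c + x) :=
    stdNormalPDF_le_of_abs_le (abs_PhiInv_add_le hc hx)
  have hdiff : 0 ≤ gaussProfile (c + x) ^ 2 - gaussProfile (c - x) ^ 2 :=
    sub_nonneg.2 (pow_le_pow_left₀ (gaussProfile_pos _).le hmono 2)
  have hdiff_sq := pow_le_pow_left₀ hdiff (gaussProfile_sq_sub_le hc hx) 2
  have hsum := mul_le_mul_of_nonneg_left (two_mul_gaussProfile_sq_add_le hc hx)
    (by positivity : 0 ≤ 8 * gaussProfile c ^ 2)
  refine two_mul_le_add_of_sq_sub_sq_le (sqrt_nonneg _) (sqrt_nonneg _) ?_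
  rw [sq_sqrt (by positivity), sq_sqrt (by positivity)]
  linarith

lemma bobkov_two_point {a b : ℝ} (ha : a ∈ Ioo (0 : ℝ) 1) (hb : b ∈ Ioo (0 : ℝ) 1) :
    gaussProfile ((a + b) / 2) ≤ (√(gaussProfile a ^ 2 + ((a - b) / 2) ^ 2) +
      √(gaussProfile b ^ 2 + ((a - b) / 2) ^ 2)) / 2 := by
  wlog hba : b ≤ a generalizing a b
  · have h := this hb ha (le_of_not_ge hba)
    rwa [add_comm b a, ← neg_sub a b, neg_div, neg_sq, add_comm √_] at h
  wlog hab : a + b ≤ 1 generalizing a b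
  · have h := this (one_sub_mem_Ioo hb) (one_sub_mem_Ioo ha) (by linarith) (by linarith)
    have hmid : (a + b) / 2 ∈ Ioo (0 : ℝ) 1 :=
      ⟨by linarith [ha.1, hb.1], by linarith [ha.2, hb.2]⟩
    rwa [show (1 - b + (1 - a)) / 2 = 1 - (a + b) / 2 by ring, gaussProfile_one_sub ha,
      gaussProfile_one_sub hb, gaussProfile_one_sub hmid,
      show 1 - b - (1 - a) = a - b by ring, add_comm √_] at h
  have h := two_mul_gaussProfile_le (c := (a + b) / 2) (x := (a - b) / 2) (by linarith)
    ⟨by linarith, by linarith [hb.1]⟩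
  rw [show (a + b) / 2 + (a - b) / 2 = a by ring,
    show (a + b) / 2 - (a - b) / 2 = b by ring] at h
  linarith

end TwoPoint

section Cube

/-- The discrete derivative, in the `i`-th direction, of a function on the cube `{1, -1}^ι`. -/
noncomputable def cubeDeriv {ι : Type*} [DecidableEq ι] (F : (ι → ℤˣ) → ℝ) (i : ι)
    (x : ι → ℤˣ) : ℝ :=
  (F (Function.update x i 1) - F (Function.update x i (-1))) / 2

lemma abs_cubeDeriv {ι : Type*} [DecidableEq ι] (F : (ι → ℤˣ) → ℝ) (i : ι) (x : ι → ℤˣ) :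
    |cubeDeriv F i x| = |F (Function.update x i (-x i)) - F x| / 2 := by
  rw [cubeDeriv, abs_div, abs_two]
  rcases Int.units_eq_one_or (x i) with hi | hi
  · have hx : Function.update x i 1 = x := Function.update_eq_self_iff.2 hi.symm
    rw [hi, abs_sub_comm, hx]
  · have hx : Function.update x i (-1) = x := Function.update_eq_self_iff.2 hi.symm
    rw [hi, neg_neg, hx]

lemma expect_mem_Ioo {α : Type*} [Fintype α] [Nonempty α] {f : α → ℝ} {a b : ℝ}
    (hf : ∀ x, f x ∈ Ioo a b) : 𝔼 x, f x ∈ Ioo a b :=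
  have ⟨x⟩ := ‹Nonempty α›
  ⟨Finset.lt_expect (fun y _ => (hf y).1.le) ⟨x, Finset.mem_univ x, (hf x).1⟩,
    Finset.expect_lt (fun y _ => (hf y).2.le) ⟨x, Finset.mem_univ x, (hf x).2⟩⟩

lemma sqrt_expect_sq_add_expect_sq_le {α : Type*} (s : Finset α) (u v : α → ℝ) :
    √((𝔼 i ∈ s, u i) ^ 2 + (𝔼 i ∈ s, v i) ^ 2) ≤ 𝔼 i ∈ s, √(u i ^ 2 + v i ^ 2) := by
  have h := RCLike.norm_expect_le (K := ℂ) (s := s) (f := fun i => ((u i : ℂ) + v i * Complex.I))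
  simpa only [Finset.expect_add_distrib, ← Finset.expect_mul, ← Complex.ofReal_expect,
    Complex.norm_add_mul_I] using h

lemma expect_cube_succ {n : ℕ} (G : (Fin (n + 1) → ℤˣ) → ℝ) :
    𝔼 x, G x =
      (𝔼 x : Fin n → ℤˣ, G (Fin.cons 1 x) + 𝔼 x : Fin n → ℤˣ, G (Fin.cons (-1) x)) / 2 := by
  rw [← Fintype.expect_equiv (Fin.consEquiv fun _ => ℤˣ) _ G fun _ => rfl,
    ← Finset.univ_product_univ, Finset.expect_product, Fintype.expect_eq_sum_div_card]
  simp [UnitsInt.univ]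
  rfl

lemma bobkov_cube_fin (n : ℕ) (F : (Fin n → ℤˣ) → ℝ) (hF : ∀ x, F x ∈ Ioo (0 : ℝ) 1) :
    gaussProfile (𝔼 x, F x) ≤ 𝔼 x, √(gaussProfile (F x) ^ 2 + ∑ i, cubeDeriv F i x ^ 2) := by
  induction n with
  | zero => simp [sqrt_sq (gaussProfile_pos _).le]
  | succ n ih =>
    set m : ℤˣ → ℝ := fun ε => 𝔼 x : Fin n → ℤˣ, F (Fin.cons ε x) with hm
    have hm_mem (ε : ℤˣ) : m ε ∈ Ioo (0 : ℝ) 1 := expect_mem_Ioo fun x => hF _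
    have hface (ε : ℤˣ) : √(gaussProfile (m ε) ^ 2 + ((m 1 - m (-1)) / 2) ^ 2) ≤
        𝔼 x : Fin n → ℤˣ, √(gaussProfile (F (Fin.cons ε x)) ^ 2 +
          ∑ i, cubeDeriv F i (Fin.cons ε x) ^ 2) := by
      set u : (Fin n → ℤˣ) → ℝ := fun x => √(gaussProfile (F (Fin.cons ε x)) ^ 2 +
        ∑ i, cubeDeriv (fun y => F (Fin.cons ε y)) i x ^ 2) with hu
      have hsplit (x : Fin n → ℤˣ) : gaussProfile (F (Fin.cons ε x)) ^ 2 +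
          ∑ i, cubeDeriv F i (Fin.cons ε x) ^ 2 = u x ^ 2 + cubeDeriv F 0 (Fin.cons ε x) ^ 2 := by
        rw [hu, sq_sqrt (by positivity), Fin.sum_univ_succ]
        simp only [cubeDeriv, Fin.cons_update]
        ring
      have hcross : (m 1 - m (-1)) / 2 = 𝔼 x : Fin n → ℤˣ, cubeDeriv F 0 (Fin.cons ε x) := by
        simp only [cubeDeriv, Fin.update_cons_zero, hm, ← Finset.expect_div,
          Finset.expect_sub_distrib]
      simp_rw [hsplit]
      refine le_trans ?_ (sqrt_expect_sq_add_expect_sq_le _ _ _)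
      rw [hcross]
      gcongr
      · exact (gaussProfile_pos _).le
      · exact ih _ fun x => hF _
    rw [expect_cube_succ, expect_cube_succ]
    refine (bobkov_two_point (hm_mem 1) (hm_mem (-1))).trans ?_
    gcongr
    exacts [hface 1, hface (-1)]

lemma bobkov_cube {ι : Type*} [Fintype ι] [DecidableEq ι] (F : (ι → ℤˣ) → ℝ)
    (hF : ∀ x, F x ∈ Ioo (0 : ℝ) 1) :
    gaussProfile (𝔼 x, F x) ≤ 𝔼 x, √(gaussProfile (F x) ^ 2 + ∑ i, cubeDeriv F i x ^ 2) := by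
  set e := Fintype.equivFin ι
  set E := e.symm.arrowCongr (Equiv.refl ℤˣ)
  have hF_expect : 𝔼 y, F (E y) = 𝔼 x, F x := Fintype.expect_equiv E _ _ fun _ => rfl
  rw [← hF_expect]
  refine (bobkov_cube_fin _ (fun y => F (E y)) fun y => hF _).trans_eq ?_
  refine Fintype.expect_equiv E _ _ fun y => ?_
  congr 2
  refine Fintype.sum_equiv e.symm _ _ fun i => ?_
  simp [cubeDeriv, E, Equiv.arrowCongr, Function.update_comp_equiv]

end Cube

section Rademacher

instance {M : Type*} [Monoid M] [MeasurableSpace M] [MeasurableSingletonClass M] :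
    MeasurableSingletonClass Mˣ where
  measurableSet_singleton u :=
    ⟨{(u : M)}, measurableSet_singleton _, by ext v; simp [Units.ext_iff]⟩

lemma integral_uniformOn_univ {α G : Type*} [Fintype α] [Nonempty α] [MeasurableSpace α]
    [MeasurableSingletonClass α] [NormedAddCommGroup G] [NormedSpace ℝ G] [Module ℚ≥0 G]
    [CompleteSpace G] (g : α → G) :
    ∫ x, g x ∂uniformOn univ = 𝔼 x, g x := by
  have : IsProbabilityMeasure (uniformOn (univ : Set α)) :=
    isProbabilityMeasure_uniformOn finite_univ univ_nonempty
  rw [integral_fintype .of_finite, Finset.expect, Finset.smul_sum]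
  refine Finset.sum_congr rfl fun x _ => ?_
  rw [measureReal_def, uniformOn_univ, ← NNRat.cast_smul_eq_nnqsmul ℝ]
  simp

lemma expect_prod_pi {κ α R : Type*} [Fintype κ] [DecidableEq κ] [Fintype α] [Field R] [CharZero R]
    (g : κ → α → R) : 𝔼 x : κ → α, ∏ i, g i (x i) = ∏ i, 𝔼 a, g i a := by
  simp only [Fintype.expect_eq_sum_div_card, Finset.prod_div_distrib, Finset.prod_univ_sum,
    Fintype.piFinset_univ, Finset.prod_const, Fintype.card_fun, Nat.cast_pow, Finset.card_univ]

variable {ι E : Type*} [Fintype ι] [NormedAddCommGroup E] [InnerProductSpace ℝ E]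
  (b : OrthonormalBasis ι ℝ E)

/-- The normalised sum of `n` sign vectors: in each direction of the orthonormal basis `b`, the sum
of `n` signs divided by `√n`. -/
noncomputable def rademacherSum (n : ℕ) (x : ι × Fin n → ℤˣ) : E :=
  (√n)⁻¹ • ∑ p, x p • b p.1

lemma inner_rademacherSum (n : ℕ) (x : ι × Fin n → ℤˣ) (t : E) :
    inner ℝ (rademacherSum b n x) t = ∑ p, ((x p : ℤ) : ℝ) * ((√n)⁻¹ * inner ℝ (b p.1) t) := by
  rw [rademacherSum, real_inner_smul_left, sum_inner, Finset.mul_sum]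
  refine Finset.sum_congr rfl fun p _ => ?_
  rw [Units.smul_def, ← Int.cast_smul_eq_zsmul ℝ, real_inner_smul_left]
  ring

lemma expect_sign_exp_mul_I (s : ℝ) :
    𝔼 ε : ℤˣ, Complex.exp ((((ε : ℤ) : ℝ) * s : ℝ) * Complex.I) = (cos s : ℂ) := by
  rw [Fintype.expect_eq_sum_div_card, UnitsInt.univ, Complex.ofReal_cos, Complex.cos]
  simp

lemma tendsto_cos_inv_sqrt_mul_pow (t : ℝ) :
    Tendsto (fun n : ℕ => cos ((√n)⁻¹ * t) ^ n) atTop (𝓝 (exp (-t ^ 2 / 2))) := by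
  have : IsProbabilityMeasure (uniformOn (univ : Set ℤˣ)) :=
    isProbabilityMeasure_uniformOn finite_univ univ_nonempty
  have hcharFun (s : ℝ) :
      charFun ((uniformOn univ).map fun ε : ℤˣ => ((ε : ℤ) : ℝ)) s = (cos s : ℂ) := by
    rw [← expect_sign_exp_mul_I, ← integral_uniformOn_univ, charFun_apply_real,
      integral_map (measurable_of_finite _).aemeasurable (by fun_prop)]
    simp [mul_comm]
  have hclt := tendsto_charFun_inv_sqrt_mul_pow (P := uniformOn univ)
    (X := fun ε : ℤˣ => ((ε : ℤ) : ℝ)) (measurable_of_finite _).aemeasurable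
    (by rw [integral_uniformOn_univ, Fintype.expect_eq_sum_div_card]; simp [UnitsInt.univ])
    (by rw [integral_uniformOn_univ, Fintype.expect_eq_sum_div_card]; simp [UnitsInt.univ]) t
  simp only [hcharFun] at hclt
  rw [← tendsto_ofReal_iff]
  simpa using hclt

variable [MeasurableSpace E]

/-- The law of `rademacherSum b n` under uniformly distributed independent signs. -/
noncomputable def rademacherLaw (n : ℕ) : Measure E :=
  (uniformOn univ).map (rademacherSum b n)

instance (n : ℕ) : IsProbabilityMeasure (rademacherLaw b n) :=
  have : IsProbabilityMeasure (uniformOn (univ : Set (ι × Fin n → ℤˣ))) :=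
    isProbabilityMeasure_uniformOn finite_univ univ_nonempty
  Measure.isProbabilityMeasure_map (measurable_of_finite _).aemeasurable

lemma integral_rademacherLaw {G : Type*} [NormedAddCommGroup G] [NormedSpace ℝ G] [Module ℚ≥0 G]
    [CompleteSpace G] [DecidableEq ι] (n : ℕ) {g : E → G}
    (hg : AEStronglyMeasurable g (rademacherLaw b n)) :
    ∫ z, g z ∂rademacherLaw b n = 𝔼 x, g (rademacherSum b n x) := by
  rw [rademacherLaw, integral_map (measurable_of_finite _).aemeasurable hg,
    integral_uniformOn_univ]

variable [BorelSpace E]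

lemma charFun_rademacherLaw (n : ℕ) (t : E) :
    charFun (rademacherLaw b n) t = ∏ j, ((cos ((√n)⁻¹ * inner ℝ (b j) t) ^ n : ℝ) : ℂ) := by
  classical
  have hprod (x : ι × Fin n → ℤˣ) : Complex.exp (inner ℝ (rademacherSum b n x) t * Complex.I) =
      ∏ p, Complex.exp
        ((((x p : ℤ) : ℝ) * ((√n)⁻¹ * inner ℝ (b p.1) t) : ℝ) * Complex.I) := by
    rw [← Complex.exp_sum, ← Finset.sum_mul, ← Complex.ofReal_sum, inner_rademacherSum]
  rw [charFun_apply, integral_rademacherLaw b n (by fun_prop)]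
  simp_rw [hprod]
  rw [expect_prod_pi fun (p : ι × Fin n) (ε : ℤˣ) => Complex.exp
    ((((ε : ℤ) : ℝ) * ((√n)⁻¹ * inner ℝ (b p.1) t) : ℝ) * Complex.I)]
  simp_rw [expect_sign_exp_mul_I]
  simp [Fintype.prod_prod_type]

lemma tendsto_integral_rademacherLaw [FiniteDimensional ℝ E] {g : E → ℝ} (hg : Continuous g)
    {M : ℝ} (hM : ∀ x, ‖g x‖ ≤ M) :
    Tendsto (fun n => ∫ z, g z ∂rademacherLaw b n) atTop
      (𝓝 (∫ z, g z ∂ProbabilityTheory.stdGaussian E)) := by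
  let μ : ℕ → ProbabilityMeasure E := fun n => ⟨rademacherLaw b n, inferInstance⟩
  let γ : ProbabilityMeasure E := ⟨ProbabilityTheory.stdGaussian E, inferInstance⟩
  have hμγ : Tendsto μ atTop (𝓝 γ) := by
    refine ProbabilityMeasure.tendsto_of_tendsto_charFun fun t => ?_
    simp only [μ, γ, ProbabilityMeasure.coe_mk, charFun_rademacherLaw, charFun_stdGaussian]
    have hexp : Complex.exp (-(‖t‖ : ℂ) ^ 2 / 2) =
        ∏ j, ((exp (-inner ℝ (b j) t ^ 2 / 2) : ℝ) : ℂ) := by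
      rw [← Complex.ofReal_prod, ← exp_sum, ← Finset.sum_div, Finset.sum_neg_distrib,
        b.sum_sq_inner_right]
      push_cast
      rfl
    rw [hexp]
    exact tendsto_finsetProd _ fun j _ => (Complex.continuous_ofReal.tendsto _).comp
      (tendsto_cos_inv_sqrt_mul_pow (inner ℝ (b j) t))
  exact ProbabilityMeasure.tendsto_iff_forall_integral_tendsto.1 hμγ
    (.ofNormedAddCommGroup g hg M hM)

end Rademacher

section FunctionalInequality

lemma integral_mem_Ioo {α : Type*} [MeasurableSpace α] {μ : Measure α} [IsProbabilityMeasure μ]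
    {f : α → ℝ} (hm : AEStronglyMeasurable f μ) {a b : ℝ} (hf : ∀ x, f x ∈ Ioo a b) :
    ∫ x, f x ∂μ ∈ Ioo a b := by
  have hint : Integrable f μ := .of_mem_Icc a b hm.aemeasurable
    (ae_of_all _ fun x => Ioo_subset_Icc_self (hf x))
  have hpos {g : α → ℝ} (hg : Integrable g μ) (hg0 : ∀ x, 0 < g x) : 0 < ∫ x, g x ∂μ := by
    rw [integral_pos_iff_support_of_nonneg (fun x => (hg0 x).le) hg,
      Function.support_eq_univ fun x => (hg0 x).ne', measure_univ]
    exact one_pos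
  have hleft := hpos (hint.sub (integrable_const a)) fun x => sub_pos.2 (hf x).1
  have hright := hpos ((integrable_const b).sub hint) fun x => sub_pos.2 (hf x).2
  simp only [Pi.sub_apply] at hleft hright
  rw [integral_sub hint (integrable_const a)] at hleft
  rw [integral_sub (integrable_const b) hint] at hright
  simp only [integral_const, probReal_univ, one_smul] at hleft hright
  exact ⟨by linarith, by linarith⟩

lemma norm_image_add_sub_sub_le_of_lipschitzWith_fderiv {E G : Type*} [NormedAddCommGroup E]
    [NormedSpace ℝ E] [NormedAddCommGroup G] [NormedSpace ℝ G] {f : E → G} {f' : E → E →L[ℝ] G}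
    (hf : ∀ x, HasFDerivAt f (f' x) x) {C : NNReal} (hf' : LipschitzWith C f') (x v : E) :
    ‖f (x + v) - f x - f' x v‖ ≤ C * ‖v‖ ^ 2 := by
  have hball : ∀ y ∈ Metric.closedBall x ‖v‖, ‖f' y - f' x‖ ≤ C * ‖v‖ := fun y hy =>
    (hf'.norm_sub_le y x).trans (by gcongr; exact mem_closedBall_iff_norm.1 hy)
  have h := (convex_closedBall x ‖v‖).norm_image_sub_le_of_norm_hasFDerivWithin_le'
    (fun y _ => (hf y).hasFDerivWithinAt) hball (Metric.mem_closedBall_self (norm_nonneg v))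
    (y := x + v) (by simp)
  rwa [add_sub_cancel_left, mul_assoc, ← sq] at h

lemma sqrt_add_sum_add_sq_le {ι : Type*} [Fintype ι] (c : ℝ) (a : ι → ℝ) {δ : ℝ} (hδ : 0 ≤ δ) :
    √(c ^ 2 + ∑ j, (a j + δ) ^ 2) ≤ √(c ^ 2 + ∑ j, a j ^ 2) + √(Fintype.card ι) * δ := by
  have hcauchy : ∑ j, a j ≤ √(Fintype.card ι) * √(c ^ 2 + ∑ j, a j ^ 2) := by
    rw [← sqrt_mul (Nat.cast_nonneg _)]
    refine le_sqrt_of_sq_le ((sq_sum_le_card_mul_sum_sq (s := Finset.univ)).trans ?_)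
    rw [Finset.card_univ]
    gcongr
    exact le_add_of_nonneg_left (sq_nonneg c)
  have hexpand : ∑ j, (a j + δ) ^ 2 = ∑ j, a j ^ 2 + 2 * δ * ∑ j, a j + Fintype.card ι * δ ^ 2 := by
    simp only [add_sq, Finset.sum_add_distrib, Finset.mul_sum, Finset.sum_const, Finset.card_univ,
      nsmul_eq_mul]
    congr 2
    exact Finset.sum_congr rfl fun j _ => by ring
  rw [sqrt_le_left (by positivity), hexpand, add_sq, mul_pow, sq_sqrt (by positivity),
    sq_sqrt (Nat.cast_nonneg _)]
  linarith [mul_le_mul_of_nonneg_left hcauchy (by positivity : 0 ≤ 2 * δ)]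

variable {ι E : Type*} [Fintype ι] [NormedAddCommGroup E] [InnerProductSpace ℝ E]

lemma sum_sq_apply_orthonormalBasis [CompleteSpace E]
    (b : OrthonormalBasis ι ℝ E) (l : E →L[ℝ] ℝ) : ∑ j, l (b j) ^ 2 = ‖l‖ ^ 2 := by
  obtain ⟨w, rfl⟩ := (InnerProductSpace.toDual ℝ E).surjective l
  simp only [InnerProductSpace.toDual_apply_apply, LinearIsometryEquiv.norm_map,
    b.sum_sq_inner_left]

lemma rademacherSum_update [DecidableEq ι] (b : OrthonormalBasis ι ℝ E) {n : ℕ}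
    (x : ι × Fin n → ℤˣ) (p : ι × Fin n) (ε : ℤˣ) :
    rademacherSum b n (Function.update x p ε) =
      rademacherSum b n x + ((√n)⁻¹ * ((ε : ℤ) - (x p : ℤ))) • b p.1 := by
  have hsum :
      ∑ q, Function.update x p ε q • b q.1 - ∑ q, x q • b q.1 = ε • b p.1 - x p • b p.1 := by
    rw [← Finset.sum_sub_distrib, Finset.sum_eq_single p (fun q _ hq => by simp [hq]) (by simp),
      Function.update_self]
  rw [rademacherSum, rademacherSum, ← sub_eq_iff_eq_add', ← smul_sub, hsum, mul_smul, sub_smul,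
    Units.smul_def, Units.smul_def, Int.cast_smul_eq_zsmul, Int.cast_smul_eq_zsmul]

lemma continuous_sqrt_gaussProfile_sq_add_norm_sq {f : E → ℝ} {f' : E → E →L[ℝ] ℝ}
    (hf : ∀ x, HasFDerivAt f (f' x) x) (hf' : Continuous f') (hf01 : ∀ x, f x ∈ Ioo (0 : ℝ) 1) :
    Continuous fun z => √(gaussProfile (f z) ^ 2 + ‖f' z‖ ^ 2) := by
  have hprofile : Continuous fun z => gaussProfile (f z) := continuous_iff_continuousAt.2 fun z =>
    (hasDerivAt_gaussProfile (hf01 z)).continuousAt.comp (f := f) (hf z).continuousAt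
  fun_prop

section SmoothFunction

variable {b : OrthonormalBasis ι ℝ E} {f : E → ℝ} {f' : E → E →L[ℝ] ℝ}
  (hf : ∀ x, HasFDerivAt f (f' x) x) {C : NNReal} (hf' : LipschitzWith C f')
include hf hf'

lemma abs_cubeDeriv_rademacherSum_le [DecidableEq ι] {n : ℕ} (x : ι × Fin n → ℤˣ)
    (p : ι × Fin n) :
    |cubeDeriv (fun y => f (rademacherSum b n y)) p x| ≤
      (√n)⁻¹ * (|f' (rademacherSum b n x) (b p.1)| + 2 * C * (√n)⁻¹) := by
  set z := rademacherSum b n x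
  have hε : |(((-x p : ℤˣ) : ℤ) : ℝ) - (x p : ℤ)| = 2 := by
    rcases Int.units_eq_one_or (x p) with hp | hp <;> norm_num [hp]
  set t := (√n)⁻¹ * ((((-x p : ℤˣ) : ℤ) : ℝ) - (x p : ℤ))
  have ht : |t| = 2 * (√n)⁻¹ := by
    rw [abs_mul, hε, abs_of_nonneg (by positivity), mul_comm]
  have htaylor := norm_image_add_sub_sub_le_of_lipschitzWith_fderiv hf hf' z (t • b p.1)
  rw [norm_smul, b.norm_eq_one, mul_one, map_smul, smul_eq_mul, norm_eq_abs, norm_eq_abs,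
    ht] at htaylor
  have htriangle := abs_add_le (f (z + t • b p.1) - f z - t * f' z (b p.1)) (t * f' z (b p.1))
  rw [sub_add_cancel, abs_mul, ht] at htriangle
  rw [abs_cubeDeriv, rademacherSum_update]
  linarith

lemma sum_cubeDeriv_rademacherSum_sq_le [DecidableEq ι] {n : ℕ} (x : ι × Fin n → ℤˣ) :
    ∑ p, cubeDeriv (fun y => f (rademacherSum b n y)) p x ^ 2 ≤
      ∑ j, (|f' (rademacherSum b n x) (b j)| + 2 * C * (√n)⁻¹) ^ 2 := by
  rw [Fintype.sum_prod_type]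
  refine Finset.sum_le_sum fun j _ => ?_
  calc ∑ k, cubeDeriv (fun y => f (rademacherSum b n y)) (j, k) x ^ 2
      ≤ ∑ _k : Fin n,
          ((√n)⁻¹ * (|f' (rademacherSum b n x) (b j)| + 2 * C * (√n)⁻¹)) ^ 2 :=
        Finset.sum_le_sum fun k _ =>
          sq_le_sq' (abs_le.1 (abs_cubeDeriv_rademacherSum_le hf hf' x (j, k))).1
            (abs_le.1 (abs_cubeDeriv_rademacherSum_le hf hf' x (j, k))).2
    _ = (n * (n : ℝ)⁻¹) * (|f' (rademacherSum b n x) (b j)| + 2 * C * (√n)⁻¹) ^ 2 := by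
        rw [Finset.sum_const, Finset.card_univ, Fintype.card_fin, nsmul_eq_mul, mul_pow, inv_pow,
          sq_sqrt (Nat.cast_nonneg n), ← mul_assoc]
    _ ≤ (|f' (rademacherSum b n x) (b j)| + 2 * C * (√n)⁻¹) ^ 2 :=
        mul_le_of_le_one_left (sq_nonneg _) mul_inv_le_one

lemma norm_fderiv_le_of_mem_Ioo (hf01 : ∀ x, f x ∈ Ioo (0 : ℝ) 1) (x : E) :
    ‖f' x‖ ≤ 1 + C := by
  refine (f' x).opNorm_le_of_unit_norm (by positivity) fun v hv => ?_
  have htaylor := norm_image_add_sub_sub_le_of_lipschitzWith_fderiv hf hf' x v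
  rw [hv, one_pow, mul_one, norm_eq_abs, abs_le] at htaylor
  obtain ⟨hx0, hx1⟩ := hf01 x
  obtain ⟨hy0, hy1⟩ := hf01 (x + v)
  exact abs_le.2 ⟨by linarith, by linarith⟩

lemma bobkov_rademacherLaw [MeasurableSpace E] [BorelSpace E] [FiniteDimensional ℝ E]
    (hf01 : ∀ x, f x ∈ Ioo (0 : ℝ) 1) (n : ℕ) :
    gaussProfile (∫ z, f z ∂rademacherLaw b n) ≤
      ∫ z, √(gaussProfile (f z) ^ 2 + ‖f' z‖ ^ 2) ∂rademacherLaw b n +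
        √(Fintype.card ι) * (2 * C * (√n)⁻¹) := by
  classical
  have hcont := continuous_sqrt_gaussProfile_sq_add_norm_sq hf hf'.continuous hf01
  have hfc : Continuous f := continuous_iff_continuousAt.2 fun z => (hf z).continuousAt
  rw [integral_rademacherLaw b n hfc.aestronglyMeasurable,
    integral_rademacherLaw b n hcont.aestronglyMeasurable]
  have hpoint (x : ι × Fin n → ℤˣ) :
      √(gaussProfile (f (rademacherSum b n x)) ^ 2 +
          ∑ p, cubeDeriv (fun y => f (rademacherSum b n y)) p x ^ 2) ≤
        √(gaussProfile (f (rademacherSum b n x)) ^ 2 + ‖f' (rademacherSum b n x)‖ ^ 2) +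
          √(Fintype.card ι) * (2 * C * (√n)⁻¹) := by
    rw [← sum_sq_apply_orthonormalBasis b]
    simp_rw [← sq_abs (f' (rademacherSum b n x) _)]
    refine le_trans ?_ (sqrt_add_sum_add_sq_le _ _ (by positivity))
    gcongr
    exact sum_cubeDeriv_rademacherSum_sq_le hf hf' x
  calc gaussProfile (𝔼 x, f (rademacherSum b n x))
      ≤ _ := bobkov_cube (fun x => f (rademacherSum b n x)) fun x => hf01 _
    _ ≤ _ := Finset.expect_le_expect fun x _ => hpoint x
    _ = _ := by rw [Finset.expect_add_distrib, Fintype.expect_const]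

end SmoothFunction

theorem bobkov_stdGaussian [MeasurableSpace E] [BorelSpace E] [FiniteDimensional ℝ E] {f : E → ℝ}
    {f' : E → E →L[ℝ] ℝ} (hf : ∀ x, HasFDerivAt f (f' x) x) {C : NNReal}
    (hf' : LipschitzWith C f') (hf01 : ∀ x, f x ∈ Ioo (0 : ℝ) 1) :
    gaussProfile (∫ z, f z ∂ProbabilityTheory.stdGaussian E) ≤
      ∫ z, √(gaussProfile (f z) ^ 2 + ‖f' z‖ ^ 2) ∂ProbabilityTheory.stdGaussian E := by
  have hcont := continuous_sqrt_gaussProfile_sq_add_norm_sq hf hf'.continuous hf01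
  have hfc : Continuous f := continuous_iff_continuousAt.2 fun z => (hf z).continuousAt
  have hbound (z : E) : ‖√(gaussProfile (f z) ^ 2 + ‖f' z‖ ^ 2)‖ ≤ √(1 ^ 2 + (1 + C) ^ 2) := by
    rw [norm_of_nonneg (sqrt_nonneg _)]
    gcongr
    exacts [(gaussProfile_pos _).le, stdNormalPDF_le_one _,
      norm_fderiv_le_of_mem_Ioo hf hf' hf01 z]
  have hlimL := tendsto_integral_rademacherLaw (stdOrthonormalBasis ℝ E) hfc (M := 1)
    fun z => abs_le.2 ⟨by linarith [(hf01 z).1], (hf01 z).2.le⟩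
  have hlimR := tendsto_integral_rademacherLaw (stdOrthonormalBasis ℝ E) hcont hbound
  have herror : Tendsto (fun n : ℕ => √(Fintype.card (Fin (Module.finrank ℝ E))) *
      (2 * C * (√n)⁻¹)) atTop (𝓝 0) := by
    have h := tendsto_inv_atTop_zero.comp (tendsto_sqrt_atTop.comp tendsto_natCast_atTop_atTop)
    simpa using (h.const_mul (2 * C : ℝ)).const_mul √(Fintype.card (Fin (Module.finrank ℝ E)))
  have hprofile := (hasDerivAt_gaussProfile (integral_mem_Ioo
    (μ := ProbabilityTheory.stdGaussian E) hfc.aestronglyMeasurable hf01)).continuousAt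
  refine le_of_tendsto_of_tendsto' (hprofile.tendsto.comp hlimL) ?_
    (bobkov_rademacherLaw (b := stdOrthonormalBasis ℝ E) hf hf' hf01)
  simpa using hlimR.add herror

end FunctionalInequality

section LipschitzApproximation

variable {E F F' G : Type*} [NormedAddCommGroup E] [NormedAddCommGroup F] [NormedSpace ℝ F]
  [NormedAddCommGroup F'] [NormedSpace ℝ F'] [NormedAddCommGroup G] [NormedSpace ℝ G]
  [MeasurableSpace E]

lemma lipschitzWith_convolution {μ : Measure E} {ψ : E → F'} {ρ : E → F} {B : F' →L[ℝ] F →L[ℝ] G}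
    {K : NNReal} (hψ : Integrable ψ μ) (hρ : LipschitzWith K ρ)
    (hex : ConvolutionExists ψ ρ B μ) :
    LipschitzWith (Real.toNNReal (‖B‖ * ∫ t, ‖ψ t‖ ∂μ) * K) (convolution ψ ρ B μ) := by
  refine .of_dist_le_mul fun x y => ?_
  rw [dist_eq_norm, convolution_def, convolution_def, ← integral_sub (hex x) (hex y),
    NNReal.coe_mul, coe_toNNReal _ (by positivity)]
  calc ‖∫ t, B (ψ t) (ρ (x - t)) - B (ψ t) (ρ (y - t)) ∂μ‖
      ≤ ∫ t, ‖B‖ * ‖ψ t‖ * (K * dist x y) ∂μ := by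
        refine norm_integral_le_of_norm_le ((hψ.norm.const_mul _).mul_const _)
          (ae_of_all _ fun t => ?_)
        rw [← map_sub, ← dist_sub_right x y t]
        refine (B.le_opNorm₂ _ _).trans ?_
        gcongr
        rw [← dist_eq_norm]
        exact hρ.dist_le_mul _ _
    _ = ‖B‖ * (∫ t, ‖ψ t‖ ∂μ) * K * dist x y := by
        rw [integral_mul_const, integral_const_mul, mul_assoc, mul_assoc, mul_assoc]

lemma exists_hasFDerivAt_lipschitzWith_approx [InnerProductSpace ℝ E] [FiniteDimensional ℝ E]
    [BorelSpace E] [CompleteSpace F] {ρ : E → F} {K : NNReal} (hρ : LipschitzWith K ρ) {ε : ℝ}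
    (hε : 0 < ε) :
    ∃ (g : E → F) (g' : E → E →L[ℝ] F) (C : NNReal), (∀ x, HasFDerivAt g (g' x) x) ∧
      LipschitzWith K g ∧ LipschitzWith C g' ∧ ∀ x, dist (g x) (ρ x) ≤ ε := by
  set r := ε / (K + 1) with hr
  let ψ : ContDiffBump (0 : E) := ⟨r / 2, r, by positivity, by linarith [show 0 < r by positivity]⟩
  let B := ContinuousLinearMap.lsmul ℝ ℝ (E := F)
  have hsupp : HasCompactSupport (ψ.normed volume) := ψ.hasCompactSupport_normed
  have hsmooth : ContDiff ℝ 1 (ψ.normed volume) := ψ.contDiff_normed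
  have hderivCont : Continuous (fderiv ℝ (ψ.normed volume)) :=
    hsmooth.continuous_fderiv one_ne_zero
  have hloc : LocallyIntegrable ρ volume := hρ.continuous.locallyIntegrable
  refine ⟨convolution (ψ.normed volume) ρ B volume,
    convolution (fderiv ℝ (ψ.normed volume)) ρ (B.precompL E) volume, _,
    hsupp.hasFDerivAt_convolution_left B hsmooth hloc, ?_,
    lipschitzWith_convolution (hderivCont.integrable_of_hasCompactSupport (hsupp.fderiv ℝ)) hρ
      ((hsupp.fderiv ℝ).convolutionExists_left _ hderivCont hloc), fun x => ?_⟩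
  · refine (lipschitzWith_convolution ψ.integrable_normed hρ
      (hsupp.convolutionExists_left B hsmooth.continuous hloc)).weaken (mul_le_of_le_one_left' ?_)
    simp only [norm_of_nonneg (ψ.nonneg_normed _), ψ.integral_normed, mul_one]
    exact toNNReal_le_one.2 ContinuousLinearMap.opNorm_lsmul_le
  · refine ψ.dist_normed_convolution_le hρ.continuous.aestronglyMeasurable fun y hy => ?_
    calc dist (ρ y) (ρ x) ≤ K * dist y x := hρ.dist_le_mul y x
      _ ≤ (K + 1) * r := by
          gcongr
          exacts [le_add_of_nonneg_right zero_le_one, (Metric.mem_ball.1 hy).le]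
      _ = ε := by rw [hr]; field_simp

end LipschitzApproximation

section ProbitMean

lemma lipschitzWith_smul_of_norm_le {X F : Type*} [PseudoMetricSpace X] [SeminormedAddCommGroup F]
    [NormedSpace ℝ F] {u : X → ℝ} {v : X → F} {Ku Kv A B : NNReal} (hu : LipschitzWith Ku u)
    (hv : LipschitzWith Kv v) (hA : ∀ x, ‖u x‖ ≤ A) (hB : ∀ x, ‖v x‖ ≤ B) :
    LipschitzWith (Ku * B + A * Kv) fun x => u x • v x := by
  refine .of_dist_le_mul fun x y => ?_
  calc dist (u x • v x) (u y • v y)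
      ≤ ‖u x - u y‖ * ‖v x‖ + ‖u y‖ * ‖v x - v y‖ := by
        rw [dist_eq_norm, ← norm_smul, ← norm_smul]
        refine (congrArg norm ?_).trans_le (norm_add_le _ _)
        module
    _ ≤ Ku * dist x y * B + A * (Kv * dist x y) := by
        rw [← dist_eq_norm, ← dist_eq_norm]
        gcongr
        exacts [hu.dist_le_mul x y, hB x, hA y, hv.dist_le_mul x y]
    _ = (Ku * B + A * Kv : NNReal) * dist x y := by push_cast; ring

/-- The average of `s - h` on the probit scale, `Φ⁻¹(∫ Φ(s - h))`. For `h = n · dist(·, A)` with `n`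
large it interpolates the quantile of the measure of the enlargements of `A`. -/
noncomputable def probitMean {α : Type*} [MeasurableSpace α] (μ : Measure α) (h : α → ℝ)
    (s : ℝ) : ℝ :=
  PhiInv (∫ z, Phi (s - h z) ∂μ)

section General

variable {α : Type*} [MeasurableSpace α] {μ : Measure α} [IsProbabilityMeasure μ] {g h : α → ℝ}

lemma integral_Phi_sub_mem_Ioo (hh : AEMeasurable h μ) (s : ℝ) :
    ∫ z, Phi (s - h z) ∂μ ∈ Ioo (0 : ℝ) 1 :=
  integral_mem_Ioo (continuous_Phi.comp_aestronglyMeasurable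
    (hh.const_sub s).aestronglyMeasurable) fun _ => Phi_mem_Ioo _

lemma integrable_Phi_sub (hh : AEMeasurable h μ) (s : ℝ) :
    Integrable (fun z => Phi (s - h z)) μ :=
  .of_mem_Icc 0 1 (continuous_Phi.measurable.comp_aemeasurable (hh.const_sub s))
    (ae_of_all _ fun _ => Ioo_subset_Icc_self (Phi_mem_Ioo _))

lemma hasDerivAt_integral_Phi_sub (hh : AEMeasurable h μ) (s : ℝ) :
    HasDerivAt (fun s => ∫ z, Phi (s - h z) ∂μ) (∫ z, φ (s - h z) ∂μ) s := by
  refine (hasDerivAt_integral_of_dominated_loc_of_deriv_le (F' := fun t z => φ (t - h z)) univ_mem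
    (.of_forall fun t => (integrable_Phi_sub hh t).aestronglyMeasurable) (integrable_Phi_sub hh s)
    (continuous_stdNormalPDF.comp_aestronglyMeasurable (hh.const_sub s).aestronglyMeasurable)
    (ae_of_all _ fun z t _ => ?_) (integrable_const 1) (ae_of_all _ fun z t _ => ?_)).2
  · rw [norm_of_nonneg (stdNormalPDF_pos _).le]
    exact stdNormalPDF_le_one _
  · exact ((hasDerivAt_Phi (t - h z)).comp t ((hasDerivAt_id t).sub_const (h z))).congr_deriv
      (mul_one _)

lemma hasDerivAt_probitMean (hh : AEMeasurable h μ) (s : ℝ) :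
    HasDerivAt (probitMean μ h)
      ((gaussProfile (∫ z, Phi (s - h z) ∂μ))⁻¹ * ∫ z, φ (s - h z) ∂μ) s :=
  (hasDerivAt_PhiInv (integral_Phi_sub_mem_Ioo hh s)).comp s (hasDerivAt_integral_Phi_sub hh s)

lemma Phi_probitMean (hh : AEMeasurable h μ) (s : ℝ) :
    Phi (probitMean μ h s) = ∫ z, Phi (s - h z) ∂μ :=
  Phi_PhiInv (integral_Phi_sub_mem_Ioo hh s)

lemma probitMean_le_probitMean (hg : AEMeasurable g μ) (hh : AEMeasurable h μ) {s t : ℝ}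
    (hst : ∀ z, s - g z ≤ t - h z) : probitMean μ g s ≤ probitMean μ h t := by
  rw [← Phi_strictMono.le_iff_le, Phi_probitMean hg, Phi_probitMean hh]
  exact integral_mono (integrable_Phi_sub hg s) (integrable_Phi_sub hh t)
    fun z => Phi_strictMono.monotone (hst z)

end General

variable {E : Type*} [NormedAddCommGroup E] [InnerProductSpace ℝ E] [FiniteDimensional ℝ E]
  [MeasurableSpace E] [BorelSpace E] {h : E → ℝ} {l : NNReal} (hl : LipschitzWith l h)
include hl

lemma gaussProfile_integral_Phi_sub_le {h' : E → E →L[ℝ] ℝ} (hh : ∀ x, HasFDerivAt h (h' x) x)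
    {C : NNReal} (hh' : LipschitzWith C h') (s : ℝ) :
    gaussProfile (∫ z, Phi (s - h z) ∂ProbabilityTheory.stdGaussian E) ≤
      √(1 + l ^ 2) * ∫ z, φ (s - h z) ∂ProbabilityTheory.stdGaussian E := by
  have hderiv (x : E) : HasFDerivAt (fun z => Phi (s - h z)) (φ (s - h x) • -h' x) x :=
    (hasDerivAt_Phi (s - h x)).comp_hasFDerivAt (f := fun z => s - h z) x ((hh x).const_sub s)
  have hnorm (x : E) : ‖h' x‖ ≤ l := (hh x).le_of_lipschitz hl
  have hφLip : LipschitzWith l fun x => φ (s - h x) := by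
    simpa [Function.comp_def] using lipschitzWith_stdNormalPDF.comp ((LipschitzWith.const s).sub hl)
  have hderivLip : LipschitzWith (l * l + 1 * C) fun x => φ (s - h x) • -h' x :=
    lipschitzWith_smul_of_norm_le hφLip hh'.neg (fun x => by
      rw [norm_of_nonneg (stdNormalPDF_pos _).le]; exact stdNormalPDF_le_one _)
      fun x => (norm_neg _).trans_le (hnorm x)
  refine (bobkov_stdGaussian hderiv hderivLip fun x => Phi_mem_Ioo _).trans ?_
  rw [← integral_const_mul]
  refine integral_mono_of_nonneg (ae_of_all _ fun z => sqrt_nonneg _) (.const_mul ?_ _)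
    (ae_of_all _ fun z => ?_)
  · exact .of_bound hφLip.continuous.aestronglyMeasurable 1 (ae_of_all _ fun z => by
      rw [norm_of_nonneg (stdNormalPDF_pos _).le]; exact stdNormalPDF_le_one _)
  · have hfactor : gaussProfile (Phi (s - h z)) ^ 2 + ‖φ (s - h z) • -h' z‖ ^ 2 =
        (1 + ‖h' z‖ ^ 2) * φ (s - h z) ^ 2 := by
      rw [gaussProfile_Phi, norm_smul, norm_neg, mul_pow, norm_eq_abs, sq_abs]
      ring
    simp only [hfactor]
    rw [sqrt_mul (by positivity), sqrt_sq (stdNormalPDF_pos _).le]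
    gcongr
    exacts [(stdNormalPDF_pos _).le, hnorm z]

lemma monotone_probitMean_sub_of_hasFDerivAt {h' : E → E →L[ℝ] ℝ}
    (hh : ∀ x, HasFDerivAt h (h' x) x) {C : NNReal} (hh' : LipschitzWith C h') :
    Monotone fun s => probitMean (ProbabilityTheory.stdGaussian E) h s - s / √(1 + l ^ 2) := by
  refine monotone_of_hasDerivAt_nonneg (fun s => (hasDerivAt_probitMean
    hl.continuous.aemeasurable s).sub ((hasDerivAt_id s).div_const √(1 + l ^ 2))) fun s => ?_
  rw [Pi.zero_apply, sub_nonneg, div_le_iff₀ (by positivity), mul_assoc, inv_mul_eq_div,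
    one_le_div (gaussProfile_pos _), mul_comm]
  exact gaussProfile_integral_Phi_sub_le hl hh hh' s

lemma monotone_probitMean_sub :
    Monotone fun s => probitMean (ProbabilityTheory.stdGaussian E) h s - s / √(1 + l ^ 2) := by
  intro a b hab
  set γ := ProbabilityTheory.stdGaussian E
  have hmeas : AEMeasurable h γ := hl.continuous.aemeasurable
  have happrox (ε : ℝ) (hε : 0 < ε) : probitMean γ h (a - ε) - a / √(1 + l ^ 2) ≤
      probitMean γ h (b + ε) - b / √(1 + l ^ 2) := by
    obtain ⟨g, g', C, hg, hgl, hg', hgh⟩ := exists_hasFDerivAt_lipschitzWith_approx hl hε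
    have hgmeas : AEMeasurable g γ := hgl.continuous.aemeasurable
    have hdist (z : E) := abs_le.1 (hgh z)
    have hlower := probitMean_le_probitMean hmeas hgmeas (s := a - ε) (t := a)
      fun z => by linarith [(hdist z).2]
    have hupper := probitMean_le_probitMean hgmeas hmeas (s := b) (t := b + ε)
      fun z => by linarith [(hdist z).1]
    have hmono := monotone_probitMean_sub_of_hasFDerivAt hgl hg hg' hab
    simp only at hmono
    linarith
  have hcont : Continuous (probitMean γ h) :=
    continuous_iff_continuousAt.2 fun s => (hasDerivAt_probitMean hmeas s).continuousAt
  have hlim (F : ℝ → ℝ) (hF : Continuous F) : Tendsto F (𝓝[>] 0) (𝓝 (F 0)) :=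
    hF.continuousWithinAt
  refine le_of_tendsto_of_tendsto (b := 𝓝[>] (0 : ℝ)) ?_ ?_
    (eventually_mem_nhdsWithin.mono happrox)
  · simpa using hlim (fun ε => probitMean γ h (a - ε) - a / √(1 + l ^ 2)) (by fun_prop)
  · simpa using hlim (fun ε => probitMean γ h (b + ε) - b / √(1 + l ^ 2)) (by fun_prop)

end ProbitMean

section Isoperimetry

variable {E : Type*} [NormedAddCommGroup E] [InnerProductSpace ℝ E] [FiniteDimensional ℝ E]
  [MeasurableSpace E] [BorelSpace E]

lemma Phi_mul_measureReal_le_integral {α : Type*} [MeasurableSpace α] {μ : Measure α}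
    [IsProbabilityMeasure μ] {h : α → ℝ} (hh : AEMeasurable h μ) {A : Set α}
    (hA : MeasurableSet A) (hzero : ∀ z ∈ A, h z = 0) (a : ℝ) :
    Phi a * μ.real A ≤ ∫ z, Phi (a - h z) ∂μ := by
  calc Phi a * μ.real A = ∫ z, A.indicator (fun _ => Phi a) z ∂μ := by
        rw [integral_indicator_const _ hA, smul_eq_mul, mul_comm]
    _ ≤ ∫ z, Phi (a - h z) ∂μ := by
        refine integral_mono ((integrable_const _).indicator hA) (integrable_Phi_sub hh a)
          (indicator_le' (fun z hz => ?_) fun z _ => (Phi_mem_Ioo _).1.le)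
        rw [hzero z hz, sub_zero]

lemma integral_Phi_sub_le_measureReal_add {α : Type*} [MeasurableSpace α] {μ : Measure α}
    [IsProbabilityMeasure μ] {h : α → ℝ} (hh : Measurable h) (b c : ℝ) :
    ∫ z, Phi (b - h z) ∂μ ≤ μ.real {z | h z ≤ c} + Phi (b - c) := by
  have hmeas : MeasurableSet {z | h z ≤ c} := measurableSet_le hh measurable_const
  calc ∫ z, Phi (b - h z) ∂μ
      ≤ ∫ z, ({z | h z ≤ c}.indicator 1 z + Phi (b - c)) ∂μ := by
        refine integral_mono (integrable_Phi_sub hh.aemeasurable b)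
          (((integrable_const 1).indicator hmeas).add (integrable_const _)) fun z => ?_
        by_cases hz : h z ≤ c
        · simp only [indicator_of_mem (show z ∈ {z | h z ≤ c} from hz), Pi.one_apply]
          linarith [(Phi_mem_Ioo (b - h z)).2, (Phi_mem_Ioo (b - c)).1]
        · simp only [indicator_of_notMem (show z ∉ {z | h z ≤ c} from hz), zero_add]
          exact Phi_strictMono.monotone (by linarith)
    _ = μ.real {z | h z ≤ c} + Phi (b - c) := by
        rw [integral_add ((integrable_const 1).indicator hmeas) (integrable_const _),
          integral_indicator_one hmeas]
        simp

lemma Phi_le_measureReal_infDist_add {A : Set E} (hA : MeasurableSet A)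
    (hp : (ProbabilityTheory.stdGaussian E).real A ∈ Ioo (0 : ℝ) 1) (η : ℝ) {n : ℝ} (hn : 0 < n)
    {t : ℝ} (ht : t ≤ n * η - t) :
    Phi (PhiInv (Phi t * (ProbabilityTheory.stdGaussian E).real A) +
        (n * η - 2 * t) / √(1 + n ^ 2)) ≤
      (ProbabilityTheory.stdGaussian E).real {z | Metric.infDist z A ≤ η} + Phi (-t) := by
  set γ := ProbabilityTheory.stdGaussian E
  have hlip : LipschitzWith ‖n‖₊ fun z => n * Metric.infDist z A := by
    simpa [Function.comp_def] using (lipschitzWith_smul n).comp (Metric.lipschitz_infDist_pt A)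
  have hmeas : Measurable fun z => n * Metric.infDist z A := hlip.continuous.measurable
  have hmono := monotone_probitMean_sub hlip ht
  have hlower : PhiInv (Phi t * γ.real A) ≤ probitMean γ (fun z => n * Metric.infDist z A) t := by
    refine PhiInv_strictMonoOn.monotoneOn ?_ (integral_Phi_sub_mem_Ioo hmeas.aemeasurable t)
      (Phi_mul_measureReal_le_integral hmeas.aemeasurable hA
        (fun z hz => by rw [Metric.infDist_zero_of_mem hz, mul_zero]) t)
    exact ⟨mul_pos (Phi_mem_Ioo t).1 hp.1,
      mul_lt_one_of_nonneg_of_lt_one_left (Phi_mem_Ioo t).1.le (Phi_mem_Ioo t).2 hp.2.le⟩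
  have hupper := integral_Phi_sub_le_measureReal_add (μ := γ) hmeas (n * η - t) (n * η)
  simp only [mul_le_mul_iff_of_pos_left hn] at hupper
  rw [← Phi_probitMean hmeas.aemeasurable, show n * η - t - n * η = -t by ring] at hupper
  refine le_trans (Phi_strictMono.monotone ?_) hupper
  simp only [coe_nnnorm, norm_of_nonneg hn.le] at hmono
  have hsplit : (n * η - 2 * t) / √(1 + n ^ 2) =
      (n * η - t) / √(1 + n ^ 2) - t / √(1 + n ^ 2) := by ring
  linarith

lemma tendsto_mul_sub_sqrt_div_sqrt (η : ℝ) :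
    Tendsto (fun n : ℝ => (n * η - 2 * √n) / √(1 + n ^ 2)) atTop (𝓝 η) := by
  have hinv : Tendsto (fun n : ℝ => n⁻¹) atTop (𝓝 0) := tendsto_inv_atTop_zero
  have hsqrt : Tendsto (fun n : ℝ => (√n)⁻¹) atTop (𝓝 0) :=
    tendsto_inv_atTop_zero.comp tendsto_sqrt_atTop
  have hlim : Tendsto (fun n : ℝ => (η - 2 * (√n)⁻¹) / √(n⁻¹ ^ 2 + 1)) atTop (𝓝 η) := by
    simpa [Pi.div_def] using
      ((hsqrt.const_mul 2).const_sub η).div ((hinv.pow 2).add_const 1).sqrt (by simp)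
  refine hlim.congr' ?_
  filter_upwards [eventually_gt_atTop 0] with n hn
  have hsqrt_pos : 0 < √n := sqrt_pos.2 hn
  have hdenom : √(1 + n ^ 2) = n * √(n⁻¹ ^ 2 + 1) := by
    rw [← sqrt_sq hn.le, ← sqrt_mul (by positivity), sqrt_sq hn.le]
    congr 1
    field_simp
  have hnum : n * η - 2 * √n = n * (η - 2 * (√n)⁻¹) := by
    field_simp [hsqrt_pos.ne']
    linear_combination (-2) * sq_sqrt hn.le
  rw [hdenom, hnum, mul_div_mul_left _ _ hn.ne']

theorem gaussian_isoperimetric {A : Set E} (hA : MeasurableSet A)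
    (hp : (ProbabilityTheory.stdGaussian E).real A ∈ Ioo (0 : ℝ) 1) {η : ℝ} (hη : 0 ≤ η) :
    Phi (PhiInv ((ProbabilityTheory.stdGaussian E).real A) + η) ≤
      (ProbabilityTheory.stdGaussian E).real {z | Metric.infDist z A ≤ η} := by
  set γ := ProbabilityTheory.stdGaussian E
  rcases hη.eq_or_lt with rfl | hη
  · rw [add_zero, Phi_PhiInv hp]
    exact measureReal_mono fun z hz => (Metric.infDist_zero_of_mem hz).le
  have hlower : Tendsto (fun n : ℝ => Phi (PhiInv (Phi √n * γ.real A) +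
      (n * η - 2 * √n) / √(1 + n ^ 2))) atTop (𝓝 (Phi (PhiInv (γ.real A) + η))) := by
    refine (continuous_Phi.tendsto _).comp (.add ((continuousAt_PhiInv hp).tendsto.comp ?_)
      (tendsto_mul_sub_sqrt_div_sqrt η))
    simpa using (tendsto_Phi_atTop.comp tendsto_sqrt_atTop).mul_const (γ.real A)
  have hupper : Tendsto (fun n : ℝ => γ.real {z | Metric.infDist z A ≤ η} + Phi (-√n)) atTop
      (𝓝 (γ.real {z | Metric.infDist z A ≤ η})) := by
    simpa using (tendsto_Phi_atBot.comp
      (tendsto_neg_atTop_atBot.comp tendsto_sqrt_atTop)).const_add _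
  refine le_of_tendsto_of_tendsto hlower hupper ?_
  filter_upwards [eventually_gt_atTop 0, tendsto_sqrt_atTop.eventually_ge_atTop (2 / η)]
    with n hn hnη
  refine Phi_le_measureReal_infDist_add hA hp η hn ?_
  rw [div_le_iff₀ hη] at hnη
  nlinarith [sq_sqrt hn.le, sqrt_nonneg n]

end Isoperimetry

section GaussianTail

lemma stdNormalPDF_add (t η : ℝ) : φ (t + η) = exp (-η ^ 2 / 2) * exp (-η * t) * φ t := by
  rw [stdNormalPDF_apply, stdNormalPDF_apply,
    show -(t + η) ^ 2 / 2 = -η ^ 2 / 2 + -η * t + -t ^ 2 / 2 by ring, exp_add, exp_add]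
  ring

lemma one_sub_Phi_add_le (t : ℝ) {η : ℝ} (hη : 0 ≤ η) :
    1 - Phi (t + η) ≤ exp (-η ^ 2 / 2) * exp (-η * t) * (1 - Phi t) := by
  rcases hη.eq_or_lt with rfl | hη
  · simp
  have hexp (t : ℝ) : HasDerivAt (fun t => exp (-η * t)) (exp (-η * t) * -η) t := by
    simpa using ((hasDerivAt_id t).const_mul (-η)).exp
  have hderiv (t : ℝ) : HasDerivAt
      (fun t => exp (-η ^ 2 / 2) * exp (-η * t) * (1 - Phi t) - (1 - Phi (t + η)))
      (-(η * exp (-η ^ 2 / 2) * exp (-η * t) * (1 - Phi t))) t := by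
    refine ((((hexp t).const_mul _).mul ((hasDerivAt_Phi t).const_sub 1)).sub
      (((hasDerivAt_Phi (t + η)).comp_add_const t η).const_sub 1)).congr_deriv ?_
    rw [stdNormalPDF_add]
    ring
  have hanti := antitone_of_hasDerivAt_nonpos hderiv fun t => by
    have : 0 ≤ 1 - Phi t := by linarith [(Phi_mem_Ioo t).2]
    simp only [Pi.zero_apply, Left.neg_nonpos_iff]
    positivity
  have hexp_lim : Tendsto (fun t => exp (-η * t)) atTop (𝓝 0) :=
    tendsto_exp_atBot.comp (tendsto_id.const_mul_atTop_of_neg (neg_lt_zero.2 hη))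
  have hshift : Tendsto (fun t => Phi (t + η)) atTop (𝓝 1) :=
    tendsto_Phi_atTop.comp (tendsto_atTop_add_const_right atTop η tendsto_id)
  have hlim : Tendsto
      (fun t => exp (-η ^ 2 / 2) * exp (-η * t) * (1 - Phi t) - (1 - Phi (t + η)))
      atTop (𝓝 0) := by
    simpa using ((hexp_lim.const_mul (exp (-η ^ 2 / 2))).mul
      (tendsto_Phi_atTop.const_sub 1)).sub (hshift.const_sub 1)
  exact sub_nonneg.1 (hanti.le_of_tendsto hlim t)

/-- The positive root `r` of `r ^ 2 + s * r = 1`: Birnbaum's lower bound for the Mills ratio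
`(1 - Phi s) / φ s`. -/
noncomputable def birnbaumRoot (s : ℝ) : ℝ := (√(s ^ 2 + 4) - s) / 2

lemma birnbaumRoot_pos (s : ℝ) : 0 < birnbaumRoot s :=
  half_pos (sub_pos.2 (lt_sqrt_of_sq_lt (by linarith)))

lemma birnbaumRoot_sq_add (s : ℝ) : birnbaumRoot s ^ 2 + s * birnbaumRoot s = 1 := by
  have hsq : √(s ^ 2 + 4) ^ 2 = s ^ 2 + 4 := sq_sqrt (by positivity)
  rw [birnbaumRoot]
  linear_combination hsq / 4

lemma le_birnbaumRoot {s v : ℝ} (h : v ^ 2 + s * v ≤ 1) : v ≤ birnbaumRoot s := by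
  by_contra! hv
  have hsum : 0 < birnbaumRoot s + s := by
    refine pos_of_mul_pos_right ?_ (birnbaumRoot_pos s).le
    linarith [birnbaumRoot_sq_add s]
  nlinarith [birnbaumRoot_pos s, birnbaumRoot_sq_add s]

lemma hasDerivAt_birnbaumRoot (s : ℝ) :
    HasDerivAt birnbaumRoot (-birnbaumRoot s ^ 2 / (1 + birnbaumRoot s ^ 2)) s := by
  have hsqrt : √(s ^ 2 + 4) = 2 * birnbaumRoot s + s := by rw [birnbaumRoot]; ring
  have hpos : 0 < √(s ^ 2 + 4) := sqrt_pos.2 (by positivity)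
  have hroot := birnbaumRoot_sq_add s
  refine (((((hasDerivAt_pow 2 s).add_const 4).sqrt (by positivity)).sub
    (hasDerivAt_id s)).div_const 2).congr_deriv ?_
  rw [hsqrt] at hpos ⊢
  have : 1 + birnbaumRoot s ^ 2 ≠ 0 := by positivity
  field_simp
  push_cast
  linear_combination 4 * birnbaumRoot s * hroot

lemma tendsto_stdNormalPDF_mul_birnbaumRoot :
    Tendsto (fun s => φ s * birnbaumRoot s) atTop (𝓝 0) := by
  refine squeeze_zero' (.of_forall fun s => ?_) ?_ tendsto_inv_atTop_zero
  · exact mul_nonneg (stdNormalPDF_pos s).le (birnbaumRoot_pos s).le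
  filter_upwards [eventually_gt_atTop 0] with s hs
  have hroot : birnbaumRoot s ≤ s⁻¹ := by
    rw [← one_div, le_div_iff₀' hs]
    linarith [birnbaumRoot_sq_add s, sq_nonneg (birnbaumRoot s)]
  exact (mul_le_of_le_one_left (birnbaumRoot_pos s).le (stdNormalPDF_le_one s)).trans hroot

theorem stdNormalPDF_mul_birnbaumRoot_le (s : ℝ) : φ s * birnbaumRoot s ≤ 1 - Phi s := by
  have hderiv (u : ℝ) : HasDerivAt (fun u => 1 - Phi u - φ u * birnbaumRoot u)
      (-(φ u * birnbaumRoot u ^ 4 / (1 + birnbaumRoot u ^ 2))) u := by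
    refine (((hasDerivAt_Phi u).const_sub 1).sub
      ((hasDerivAt_stdNormalPDF u).mul (hasDerivAt_birnbaumRoot u))).congr_deriv ?_
    have : 1 + birnbaumRoot u ^ 2 ≠ 0 := by positivity
    field_simp
    linear_combination φ u * (1 + birnbaumRoot u ^ 2) * birnbaumRoot_sq_add u
  have hanti := antitone_of_hasDerivAt_nonpos hderiv fun u => by
    have := stdNormalPDF_pos u
    simp only [Pi.zero_apply, Left.neg_nonpos_iff]
    positivity
  have hlim : Tendsto (fun u => 1 - Phi u - φ u * birnbaumRoot u) atTop (𝓝 0) := by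
    simpa using (tendsto_Phi_atTop.const_sub 1).sub tendsto_stdNormalPDF_mul_birnbaumRoot
  exact sub_nonneg.1 (hanti.le_of_tendsto hlim s)

end GaussianTail

section GaussianQuantile

lemma log_le_div_exp_one {k : ℝ} (hk : 0 < k) : log k ≤ k / exp 1 := by
  have h := add_one_le_exp (log k - 1)
  rwa [sub_add_cancel, exp_sub, exp_log hk] at h

lemma one_le_log_of_five_le {k : ℝ} (hk : 5 ≤ k) : 1 ≤ log k :=
  (le_log_iff_exp_le (by linarith)).2 (by linarith [exp_one_lt_d9])

lemma one_le_sq_div_four_pi_log {k : ℝ} (hk : 5 ≤ k) : 1 ≤ k ^ 2 / (4 * π * log k) := by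
  have hlog := one_le_log_of_five_le hk
  have hfour : 4 * π ≤ 5 * exp 1 := by linarith [pi_lt_d2, exp_one_gt_d9]
  rw [one_le_div (by positivity)]
  calc 4 * π * log k ≤ 5 * exp 1 * (k / exp 1) := by
        gcongr
        exact log_le_div_exp_one (by linarith)
    _ = 5 * k := by field_simp
    _ ≤ k ^ 2 := by nlinarith

lemma log_sq_div_four_pi_log {k : ℝ} (hk : 1 < k) :
    log (k ^ 2 / (4 * π * log k)) = 2 * log k - log (4 * π * log k) := by
  have hlog : 0 < log k := log_pos hk
  rw [log_div (by positivity) (by positivity), log_pow, Nat.cast_two]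

lemma stdNormalPDF_sqrt_log {k : ℝ} (hk : 1 < k) (h : 1 ≤ k ^ 2 / (4 * π * log k)) :
    φ √(log (k ^ 2 / (4 * π * log k))) = √(2 * log k) / k := by
  have hlog : 0 < log k := log_pos hk
  have hexp : exp (-√(log (k ^ 2 / (4 * π * log k))) ^ 2 / 2) = √(4 * π * log k) / k := by
    rw [sq_sqrt (log_nonneg h), log_sq_div_four_pi_log hk,
      show -(2 * log k - log (4 * π * log k)) / 2 = log (4 * π * log k) / 2 - log k by ring,
      exp_sub, exp_log (by linarith), exp_half, exp_log (by positivity)]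
  rw [stdNormalPDF_apply, hexp, show 4 * π * log k = (2 * π) * (2 * log k) by ring,
    sqrt_mul (by positivity : 0 ≤ 2 * π) (2 * log k)]
  field_simp

lemma two_le_log_four_pi_log {k : ℝ} (hk : 5 ≤ k) : 2 ≤ log (4 * π * log k) := by
  have hlog := one_le_log_of_five_le hk
  have hexp : exp 2 = exp 1 ^ 2 := by rw [← exp_nat_mul]; norm_num
  rw [le_log_iff_exp_le (by positivity), hexp]
  nlinarith [exp_one_lt_d9, exp_one_gt_d9, pi_gt_three]

lemma sqrt_log_le_sub_inv {k : ℝ} (hk : 5 ≤ k) :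
    √(log (k ^ 2 / (4 * π * log k))) ≤ √(2 * log k) - (√(2 * log k))⁻¹ := by
  have hlog := one_le_log_of_five_le hk
  set w := √(2 * log k)
  have hw : w ^ 2 = 2 * log k := sq_sqrt (by linarith)
  have hw_one : 1 ≤ w := one_le_sqrt.2 (by linarith)
  have hw_inv : w⁻¹ ≤ 1 := inv_le_one_of_one_le₀ hw_one
  rw [sqrt_le_left (by linarith), log_sq_div_four_pi_log (by linarith)]
  calc 2 * log k - log (4 * π * log k) ≤ w ^ 2 - 2 + w⁻¹ ^ 2 := by
        linarith [two_le_log_four_pi_log hk, sq_nonneg w⁻¹]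
    _ = (w - w⁻¹) ^ 2 := by field_simp; ring

theorem sqrt_log_le_PhiInv {k : ℝ} (hk : 5 ≤ k) :
    √(log (k ^ 2 / (4 * π * log k))) ≤ PhiInv (1 - 1 / k) := by
  have hk_one : 1 < k := by linarith
  set s := √(log (k ^ 2 / (4 * π * log k))) with hs
  set w := √(2 * log k) with hw
  have hw_pos : 0 < w := sqrt_pos.2 (by linarith [log_pos hk_one])
  have hroot : w⁻¹ ≤ birnbaumRoot s := by
    refine le_birnbaumRoot ?_
    calc w⁻¹ ^ 2 + s * w⁻¹ ≤ w⁻¹ ^ 2 + (w - w⁻¹) * w⁻¹ := by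
          gcongr
          exact sqrt_log_le_sub_inv hk
      _ = 1 := by field_simp; ring
  have htail : 1 / k ≤ 1 - Phi s :=
    calc 1 / k = φ s * w⁻¹ := by
          rw [hs, stdNormalPDF_sqrt_log hk_one (one_le_sq_div_four_pi_log hk), ← hw]
          field_simp
      _ ≤ φ s * birnbaumRoot s := mul_le_mul_of_nonneg_left hroot (stdNormalPDF_pos s).le
      _ ≤ 1 - Phi s := stdNormalPDF_mul_birnbaumRoot_le s
  have hmem : 1 / k ∈ Ioo (0 : ℝ) 1 := ⟨by positivity, (div_lt_one (by linarith)).2 hk_one⟩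
  rw [le_PhiInv_iff (one_sub_mem_Ioo hmem)]
  linarith

end GaussianQuantile

section PartitionBoundary

lemma measureReal_lt_infDist_compl_le {E : Type*} [NormedAddCommGroup E] [InnerProductSpace ℝ E]
    [FiniteDimensional ℝ E] [MeasurableSpace E] [BorelSpace E] {B : Set E} (hB : MeasurableSet B)
    {q : ℝ} (hq : q ∈ Ioo (0 : ℝ) 1) (hBq : (ProbabilityTheory.stdGaussian E).real B ≤ q)
    {η : ℝ} (hη : 0 ≤ η) :
    (ProbabilityTheory.stdGaussian E).real {z | η < Metric.infDist z Bᶜ} ≤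
      exp (-η ^ 2 / 2) * exp (-η * PhiInv (1 - q)) *
        (ProbabilityTheory.stdGaussian E).real B := by
  set γ := ProbabilityTheory.stdGaussian E
  have hcompl : γ.real Bᶜ = 1 - γ.real B := probReal_compl_eq_one_sub hB
  rcases (measureReal_nonneg (μ := γ) (s := B)).eq_or_lt with hzero | hpos
  · rw [← hzero, mul_zero]
    refine (measureReal_mono fun z hz => ?_).trans hzero.ge
    by_contra hzB
    exact (hη.trans_lt hz).ne' (Metric.infDist_zero_of_mem hzB)
  have hp := one_sub_mem_Ioo ⟨hpos, hBq.trans_lt hq.2⟩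
  have hquantile : PhiInv (1 - q) ≤ PhiInv (1 - γ.real B) :=
    PhiInv_strictMonoOn.monotoneOn (one_sub_mem_Ioo hq) hp (sub_le_sub_left hBq 1)
  calc γ.real {z | η < Metric.infDist z Bᶜ}
      = 1 - γ.real {z | Metric.infDist z Bᶜ ≤ η} := by
        rw [← probReal_compl_eq_one_sub (measurableSet_le measurable_infDist measurable_const)]
        simp only [compl_ofPred, not_le]
    _ ≤ 1 - Phi (PhiInv (1 - γ.real B) + η) := by
        have h := gaussian_isoperimetric hB.compl (by rwa [hcompl]) hη
        rw [hcompl] at h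
        exact sub_le_sub_left h 1
    _ ≤ exp (-η ^ 2 / 2) * exp (-η * PhiInv (1 - γ.real B)) * γ.real B := by
        simpa [Phi_PhiInv hp] using one_sub_Phi_add_le (PhiInv (1 - γ.real B)) hη
    _ ≤ exp (-η ^ 2 / 2) * exp (-η * PhiInv (1 - q)) * γ.real B := by
        have : -η * PhiInv (1 - γ.real B) ≤ -η * PhiInv (1 - q) :=
          mul_le_mul_of_nonpos_left hquantile (neg_nonpos.2 hη)
        gcongr

lemma distSet_eq_infDist {d : ℕ} (z : Fin d → ℝ) (A : Set (Fin d → ℝ)) :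
    distSet z A = Metric.infDist (WithLp.toLp 2 z)
      ((WithLp.ofLp : EuclideanSpace ℝ (Fin d) → Fin d → ℝ) ⁻¹' A) := by
  rw [Metric.infDist_eq_iInf, distSet, iInf]
  congr 1
  ext t
  simp only [mem_ofPred_eq, mem_range, Subtype.exists, mem_preimage]
  constructor
  · rintro ⟨y, hy, rfl⟩
    exact ⟨WithLp.toLp 2 y, hy, by simp [EuclideanSpace.dist_eq, l2, Real.dist_eq]⟩
  · rintro ⟨y, hy, rfl⟩
    exact ⟨y.ofLp, hy, by simp [EuclideanSpace.dist_eq, l2, Real.dist_eq]⟩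

instance (d : ℕ) : IsProbabilityMeasure (_root_.stdGaussian d) := by
  unfold _root_.stdGaussian; infer_instance

lemma stdGaussian_real_preimage_toLp {d : ℕ} {S : Set (EuclideanSpace ℝ (Fin d))}
    (hS : MeasurableSet S) :
    (_root_.stdGaussian d).real (WithLp.toLp 2 ⁻¹' S) =
      (ProbabilityTheory.stdGaussian (EuclideanSpace ℝ (Fin d))).real S := by
  rw [← map_pi_eq_stdGaussian, map_measureReal_apply (WithLp.measurable_toLp 2 _) hS]
  rfl

lemma stdGaussian_real_lt_distSet_compl_le {d : ℕ} {B : Set (Fin d → ℝ)} (hB : MeasurableSet B)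
    {q : ℝ} (hq : q ∈ Ioo (0 : ℝ) 1) (hBq : (_root_.stdGaussian d).real B ≤ q)
    {η : ℝ} (hη : 0 ≤ η) :
    (_root_.stdGaussian d).real {z | η < distSet z Bᶜ} ≤
      exp (-η ^ 2 / 2) * exp (-η * PhiInv (1 - q)) * (_root_.stdGaussian d).real B := by
  have hmeas := WithLp.measurable_ofLp 2 _ hB
  have hcell := stdGaussian_real_preimage_toLp hmeas
  have hfar := stdGaussian_real_preimage_toLp (measurableSet_lt measurable_const
    (measurable_infDist (s := (WithLp.ofLp ⁻¹' B : Set (EuclideanSpace ℝ (Fin d)))ᶜ)) :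
      MeasurableSet {z | η < Metric.infDist z (WithLp.ofLp ⁻¹' B)ᶜ})
  simp only [preimage_preimage, preimage_id'] at hcell
  simp only [distSet_eq_infDist]
  have h := measureReal_lt_infDist_compl_le hmeas hq (hcell ▸ hBq) hη
  rwa [← hcell, ← hfar] at h

theorem partition_boundary_measure_equiprobable_general {ι : Type*} [Countable ι] (d : ℕ) (k : ℝ)
    (hk : 5 ≤ k) (B : ι → Set (Fin d → ℝ)) (hmeas : ∀ i, MeasurableSet (B i))
    (hdisj : Pairwise (Function.onFun Disjoint B)) (hcover : (⋃ i, B i) = univ)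
    (hprob : ∀ i, (_root_.stdGaussian d).real (B i) ≤ 1 / k) (η : ℝ) (hη : 0 ≤ η) :
    1 - exp (-η ^ 2 / 2) * exp (-η * √(log (k ^ 2 / (4 * π * log k)))) ≤
      (_root_.stdGaussian d).real {z | ∃ i, z ∈ B i ∧ distSet z (B i)ᶜ ≤ η} := by
  set ν := _root_.stdGaussian d
  set T := {z | ∃ i, z ∈ B i ∧ distSet z (B i)ᶜ ≤ η}
  set c := exp (-η ^ 2 / 2) * exp (-η * PhiInv (1 - 1 / k))
  have hq : 1 / k ∈ Ioo (0 : ℝ) 1 := ⟨by positivity, (div_lt_one (by linarith)).2 (by linarith)⟩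
  have hcell (i : ι) : ν {z | η < distSet z (B i)ᶜ} ≤ ENNReal.ofReal c * ν (B i) := by
    rw [← ofReal_measureReal, ← ofReal_measureReal, ← ENNReal.ofReal_mul (by positivity)]
    exact ENNReal.ofReal_le_ofReal
      (stdGaussian_real_lt_distSet_compl_le (hmeas i) hq (hprob i) hη)
  have hsub : Tᶜ ⊆ ⋃ i, {z | η < distSet z (B i)ᶜ} := fun z hz => by
    obtain ⟨i, hi⟩ := mem_iUnion.1 (hcover ▸ mem_univ z)
    exact mem_iUnion.2 ⟨i, not_le.1 fun h => hz ⟨i, hi, h⟩⟩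
  have hfar : ν Tᶜ ≤ ENNReal.ofReal c :=
    calc ν Tᶜ ≤ ∑' i, ν {z | η < distSet z (B i)ᶜ} :=
          (measure_mono hsub).trans (measure_iUnion_le _)
      _ ≤ ∑' i, ENNReal.ofReal c * ν (B i) := ENNReal.tsum_le_tsum hcell
      _ = ENNReal.ofReal c := by
          rw [ENNReal.tsum_mul_left, ← measure_iUnion hdisj hmeas, hcover, measure_univ, mul_one]
  have htotal : 1 ≤ ν.real T + ν.real Tᶜ := by
    simpa using measureReal_union_le (μ := ν) T Tᶜ
  have hcle : c ≤ exp (-η ^ 2 / 2) * exp (-η * √(log (k ^ 2 / (4 * π * log k)))) :=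
    mul_le_mul_of_nonneg_left (exp_le_exp.2
      (mul_le_mul_of_nonpos_left (sqrt_log_le_PhiInv hk) (neg_nonpos.2 hη))) (exp_pos _).le
  linarith [ENNReal.toReal_le_of_le_ofReal (by positivity) hfar, measureReal_def ν Tᶜ]

end PartitionBoundary

/-- For an equiprobable Gaussian partition into `K ≥ 5` cells, most points are within
ℓ₂-distance `η` of the complement of their own cell. -/
theorem partition_boundary_measure_equiprobable (d K : ℕ) (hK : 5 ≤ K)
    (B : Fin K → Set (Fin d → ℝ))
    (hmeas : ∀ i, MeasurableSet (B i))
    (hdisj : Pairwise (Function.onFun Disjoint B))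
    (hcover : (⋃ i, B i) = Set.univ)
    (hprob : ∀ i, ((stdGaussian d) (B i)).toReal = 1 / (K : ℝ))
    (η : ℝ) (hη : 1 ≤ η) :
    ((stdGaussian d) {z | ∃ i, z ∈ B i ∧ distSet z (B i)ᶜ ≤ η}).toReal ≥
      1 - Real.sqrt (π / 2) * Real.exp (-η ^ 2 / 2) *
        Real.exp (-η * Real.sqrt (Real.log ((K : ℝ) ^ 2 / (4 * π * Real.log K)))) := by
  refine ge_trans (partition_boundary_measure_equiprobable_general d K (by exact_mod_cast hK) B
    hmeas hdisj hcover (fun i => (hprob i).le) η (by linarith)) (sub_le_sub_left ?_ 1)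
  have hsqrt : 1 ≤ √(π / 2) := one_le_sqrt.2 (by linarith [pi_gt_three])
  rw [mul_assoc √(π / 2)]
  exact le_mul_of_one_le_left (by positivity) hsqrt
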